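/- Suppose the family {ρ_{x,s}} satisfies Assumption A. Then the random code capacity C_r of the classical-quantum arbitrarily varying channel equals sup_P inf_Q I[X;B]_{P,Q}, where the supremum is over probability distributions P on 𝒳 and the infimum is over finitely supported probability distributions Q on 𝒮. -/

import Mathlib

open Filter
open scoped ComplexOrder

noncomputable section

/-- A density matrix: positive semidefinite with unit trace. -/
def IsDensity {m : Type*} [Fintype m] (ρ : Matrix m m ℂ) : Prop :=
  ρ.PosSemidef ∧ ρ.trace = 1

/-- Loewner order `A ⪯ B`. -/
def Loewner {m : Type*} [Fintype m] (A B : Matrix m m ℂ) : Prop :=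
  (B - A).PosSemidef

/-- Functional calculus for Hermitian matrices (junk value `0` on non-Hermitian input). -/
def matFun {m : Type*} [Fintype m] [DecidableEq m] (f : ℝ → ℝ) (A : Matrix m m ℂ) :
    Matrix m m ℂ :=
  if hA : A.IsHermitian then
    (hA.eigenvectorUnitary : Matrix m m ℂ) *
        Matrix.diagonal (fun i => (f (hA.eigenvalues i) : ℂ)) *
      star (hA.eigenvectorUnitary : Matrix m m ℂ)
  else 0

/-- Base-2 matrix logarithm, taken on the support. -/
def mlog2 {m : Type*} [Fintype m] [DecidableEq m] (A : Matrix m m ℂ) : Matrix m m ℂ :=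
  matFun (fun u => if u ≤ 0 then 0 else Real.logb 2 u) A

/-- Quantum relative entropy `D(ρ‖σ) = Tr[ρ(log₂ρ − log₂σ)]` (logarithms on supports). -/
def relEnt {m : Type*} [Fintype m] [DecidableEq m] (ρ σ : Matrix m m ℂ) : ℝ :=
  (Matrix.trace (ρ * (mlog2 ρ - mlog2 σ))).re

/-- The classical–quantum state `Σ_x w(x) |x⟩⟨x| ⊗ ρ_x`. -/
def cqState {X B : Type*} [DecidableEq X] (w : X → ℝ) (ρ : X → Matrix B B ℂ) :
    Matrix (X × B) (X × B) ℂ :=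
  Matrix.of fun p q => (if p.1 = q.1 then ((w p.1 : ℝ) : ℂ) else 0) * ρ p.1 p.2 q.2

/-- Tensor product of a finite family of matrices, realized on functions. -/
def tensorFam {k d : Type*} [Fintype k] (ρ : k → Matrix d d ℂ) :
    Matrix (k → d) (k → d) ℂ :=
  Matrix.of fun i j => ∏ a, ρ a (i a) (j a)

/-- Finitely supported probability distributions on `𝒮`. -/
abbrev FinProb (𝒮 : Type*) : Type _ :=
  {Q : 𝒮 →₀ ℝ // (∀ s, 0 ≤ Q s) ∧ Q.sum (fun _ a => a) = 1}

/-- Assumption A. -/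
def AssumptionA {𝒳 𝒮 : Type*} {d : ℕ} (ρ : 𝒳 → 𝒮 → Matrix (Fin d) (Fin d) ℂ) : Prop :=
  ∀ ε : ℝ, 0 < ε → ∃ Sε : Finset 𝒮, ∀ s : 𝒮, ∃ s' ∈ Sε, ∀ x : 𝒳,
    Loewner (ρ x s) ((1 + ε) • ρ x s')

/-- The mutual information `I[X;B]_{P,Q}`. -/
def mutInfI {𝒳 𝒮 : Type*} [Fintype 𝒳] [DecidableEq 𝒳] {d : ℕ}
    (ρ : 𝒳 → 𝒮 → Matrix (Fin d) (Fin d) ℂ) (P : 𝒳 → ℝ) (Q : 𝒮 →₀ ℝ) : ℝ :=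
  relEnt (cqState P (fun x => Q.sum fun s w => w • ρ x s))
    (cqState P (fun _ => ∑ x, P x • (Q.sum fun s w => w • ρ x s)))

/-- Probability distributions on the finite set `𝒳`. -/
abbrev ProbDist (𝒳 : Type*) [Fintype 𝒳] : Type _ :=
  {P : 𝒳 → ℝ // (∀ x, 0 ≤ P x) ∧ ∑ x, P x = 1}

section PartA
set_option linter.unusedSectionVars false
open scoped MatrixOrder
open Matrix

variable {ι : Type*} [Fintype ι]

/-- Real part of the trace. -/
def rtr (A : Matrix ι ι ℂ) : ℝ := A.trace.re

lemma rtr_add (A B : Matrix ι ι ℂ) : rtr (A + B) = rtr A + rtr B := by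
  simp [rtr, Matrix.trace_add]

lemma rtr_sub (A B : Matrix ι ι ℂ) : rtr (A - B) = rtr A - rtr B := by
  simp [rtr, Matrix.trace_sub]

lemma rtr_smul (c : ℝ) (A : Matrix ι ι ℂ) : rtr (c • A) = c * rtr A := by
  simp [rtr, Matrix.trace_smul]

lemma rtr_sum {κ : Type*} (s : Finset κ) (A : κ → Matrix ι ι ℂ) :
    rtr (∑ k ∈ s, A k) = ∑ k ∈ s, rtr (A k) := by
  simp [rtr, Matrix.trace_sum]

lemma rtr_mul_comm (A B : Matrix ι ι ℂ) : rtr (A * B) = rtr (B * A) := by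
  simp [rtr, Matrix.trace_mul_comm A B]

lemma rtr_nonneg {A : Matrix ι ι ℂ} (hA : 0 ≤ A) : 0 ≤ rtr A := by
  have := (Matrix.nonneg_iff_posSemidef.1 hA).trace_nonneg
  exact (Complex.le_def.1 this).1

lemma psd_conj {A : Matrix ι ι ℂ} (hA : 0 ≤ A) (B : Matrix ι ι ℂ) : 0 ≤ Bᴴ * A * B := by
  rw [Matrix.nonneg_iff_posSemidef] at *
  exact hA.conjTranspose_mul_mul_same B

lemma conj_mono {A A' : Matrix ι ι ℂ} (hA : A ≤ A') (B : Matrix ι ι ℂ) :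
    Bᴴ * A * B ≤ Bᴴ * A' * B := by
  have := psd_conj (sub_nonneg.2 hA) B
  rw [Matrix.mul_sub, Matrix.sub_mul] at this
  exact sub_nonneg.1 this

lemma smul_psd {c : ℝ} (hc : 0 ≤ c) {A : Matrix ι ι ℂ} (hA : 0 ≤ A) : 0 ≤ c • A := by
  rw [Matrix.nonneg_iff_posSemidef] at *
  exact hA.smul hc

lemma smul_mono {c : ℝ} (hc : 0 ≤ c) {A B : Matrix ι ι ℂ} (h : A ≤ B) : c • A ≤ c • B := by
  have := smul_psd hc (sub_nonneg.2 h)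
  rw [smul_sub] at this
  exact sub_nonneg.1 this

lemma smul_mono_left {c c' : ℝ} (hc : c ≤ c') {A : Matrix ι ι ℂ} (h : 0 ≤ A) : c • A ≤ c' • A := by
  have := smul_psd (sub_nonneg.2 hc) h
  rw [sub_smul] at this
  exact sub_nonneg.1 this

variable [DecidableEq ι]

lemma rtr_mul_nonneg {A B : Matrix ι ι ℂ} (hA : 0 ≤ A) (hB : 0 ≤ B) : 0 ≤ rtr (A * B) := by
  obtain ⟨C, rfl⟩ := CStarAlgebra.nonneg_iff_eq_star_mul_self.1 hB
  have : rtr (A * (star C * C)) = rtr (star (star C) * A * star C) := by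
    rw [← Matrix.mul_assoc, rtr_mul_comm, star_star, Matrix.mul_assoc]
  rw [this]
  exact rtr_nonneg (psd_conj hA _)

lemma rtr_mul_mono {A A' B : Matrix ι ι ℂ} (hA : A ≤ A') (hB : 0 ≤ B) :
    rtr (A * B) ≤ rtr (A' * B) := by
  have := rtr_mul_nonneg (sub_nonneg.2 hA) hB
  rw [Matrix.sub_mul, rtr_sub] at this
  linarith

lemma rtr_mul_mono' {A B B' : Matrix ι ι ℂ} (hB : B ≤ B') (hA : 0 ≤ A) :
    rtr (A * B) ≤ rtr (A * B') := by
  rw [rtr_mul_comm A, rtr_mul_comm A]; exact rtr_mul_mono hB hA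

/-- Unitary matrices. -/
def IsUni (U : Matrix ι ι ℂ) : Prop := Uᴴ * U = 1 ∧ U * Uᴴ = 1

/-- `U diag(g) U*`. -/
def sdiag (U : Matrix ι ι ℂ) (g : ι → ℝ) : Matrix ι ι ℂ :=
  U * Matrix.diagonal (fun j => (g j : ℂ)) * Uᴴ

/-- diagonal of `A` in the basis `U`. -/
def diagw (U A : Matrix ι ι ℂ) (j : ι) : ℝ := ((Uᴴ * A * U) j j).re

lemma sdiag_psd (U : Matrix ι ι ℂ) {g : ι → ℝ} (hg : ∀ j, 0 ≤ g j) : 0 ≤ sdiag U g := by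
  rw [Matrix.nonneg_iff_posSemidef]
  refine (Matrix.PosSemidef.diagonal ?_).mul_mul_conjTranspose_same U
  intro j; simpa using hg j

lemma sdiag_sub (U : Matrix ι ι ℂ) (g h : ι → ℝ) :
    sdiag U (fun j => g j - h j) = sdiag U g - sdiag U h := by
  unfold sdiag
  rw [← Matrix.sub_mul, ← Matrix.mul_sub, Matrix.diagonal_sub]
  simp

lemma sdiag_mono (U : Matrix ι ι ℂ) {g h : ι → ℝ} (hg : ∀ j, g j ≤ h j) :
    sdiag U g ≤ sdiag U h := by
  rw [← sub_nonneg, ← sdiag_sub]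
  exact sdiag_psd U fun j => sub_nonneg.2 (hg j)

lemma sdiag_smul (U : Matrix ι ι ℂ) (c : ℝ) (g : ι → ℝ) :
    sdiag U (fun j => c * g j) = c • sdiag U g := by
  unfold sdiag
  rw [← Matrix.smul_mul, ← Matrix.mul_smul, ← Matrix.diagonal_smul]
  congr 3; ext j; simp

lemma sdiag_one {U : Matrix ι ι ℂ} (hU : IsUni U) : sdiag U (fun _ => 1) = 1 := by
  simp [sdiag, hU.2]

lemma sdiag_mul {U : Matrix ι ι ℂ} (hU : IsUni U) (g h : ι → ℝ) :
    sdiag U g * sdiag U h = sdiag U (fun j => g j * h j) := by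
  unfold sdiag
  calc _ = U * diagonal (fun j => (g j : ℂ)) * (Uᴴ * U) * diagonal (fun j => (h j : ℂ)) * Uᴴ := by
        simp only [Matrix.mul_assoc]
    _ = _ := by
        rw [hU.1, Matrix.mul_one, Matrix.mul_assoc U, Matrix.diagonal_mul_diagonal]
        simp

lemma sdiag_herm (U : Matrix ι ι ℂ) (g : ι → ℝ) : (sdiag U g)ᴴ = sdiag U g := by
  unfold sdiag
  simp only [Matrix.conjTranspose_mul, Matrix.conjTranspose_conjTranspose, Matrix.mul_assoc,
    Matrix.diagonal_conjTranspose]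
  congr 3; ext j; simp

lemma rtr_mul_sdiag (A U : Matrix ι ι ℂ) (g : ι → ℝ) :
    rtr (A * sdiag U g) = ∑ j, g j * diagw U A j := by
  unfold rtr sdiag diagw
  rw [← Matrix.mul_assoc, Matrix.trace_mul_comm, ← Matrix.mul_assoc, ← Matrix.mul_assoc]
  simp only [Matrix.trace, Matrix.diag, Matrix.mul_diagonal, Complex.re_sum]
  refine Finset.sum_congr rfl fun j _ => ?_
  rw [mul_comm, Complex.re_ofReal_mul]

lemma diagw_nonneg (U : Matrix ι ι ℂ) {A : Matrix ι ι ℂ} (hA : 0 ≤ A) (j : ι) :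
    0 ≤ diagw U A j := by
  have := (Matrix.nonneg_iff_posSemidef.1 (psd_conj hA U)).diag_nonneg (i := j)
  exact (Complex.le_def.1 this).1

lemma sum_diagw {U : Matrix ι ι ℂ} (hU : IsUni U) (A : Matrix ι ι ℂ) :
    ∑ j, diagw U A j = rtr A := by
  have := rtr_mul_sdiag A U (fun _ => 1)
  rw [sdiag_one hU] at this
  simpa using this.symm

lemma diagw_sdiag {U : Matrix ι ι ℂ} (hU : IsUni U) (g : ι → ℝ) (j : ι) :
    diagw U (sdiag U g) j = g j := by
  unfold diagw sdiag
  have : Uᴴ * (U * diagonal (fun j => (g j : ℂ)) * Uᴴ) * U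
      = (Uᴴ * U) * diagonal (fun j => (g j : ℂ)) * (Uᴴ * U) := by
    simp only [Matrix.mul_assoc]
  rw [this, hU.1]; simp

lemma diagw_add (U A B : Matrix ι ι ℂ) (j : ι) :
    diagw U (A + B) j = diagw U A j + diagw U B j := by
  simp [diagw, Matrix.mul_add, Matrix.add_mul]

lemma diagw_smul (U : Matrix ι ι ℂ) (c : ℝ) (A : Matrix ι ι ℂ) (j : ι) :
    diagw U (c • A) j = c * diagw U A j := by
  simp [diagw]

lemma diagw_sum {κ : Type*} (s : Finset κ) (U : Matrix ι ι ℂ) (A : κ → Matrix ι ι ℂ) (j : ι) :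
    diagw U (∑ k ∈ s, A k) j = ∑ k ∈ s, diagw U (A k) j := by
  simp [diagw, Matrix.mul_sum, Matrix.sum_mul, Matrix.sum_apply]

/-- A chosen eigenbasis. -/
def specU (A : Matrix ι ι ℂ) : Matrix ι ι ℂ :=
  if h : A.IsHermitian then (h.eigenvectorUnitary : Matrix ι ι ℂ) else 1

/-- The corresponding eigenvalues. -/
def specL (A : Matrix ι ι ℂ) : ι → ℝ :=
  if h : A.IsHermitian then h.eigenvalues else 0

lemma specU_uni (A : Matrix ι ι ℂ) : IsUni (specU A) := by
  unfold specU
  split_ifs with h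
  · exact ⟨Unitary.coe_star_mul_self h.eigenvectorUnitary,
      Unitary.coe_mul_star_self h.eigenvectorUnitary⟩
  · simp [IsUni]

lemma spec_eq {A : Matrix ι ι ℂ} (h : A.IsHermitian) : sdiag (specU A) (specL A) = A := by
  have := h.spectral_theorem
  rw [Unitary.conjStarAlgAut_apply] at this
  unfold sdiag specU specL
  simp only [h, dite_true]
  exact this.symm

lemma psd_herm {A : Matrix ι ι ℂ} (h : 0 ≤ A) : A.IsHermitian :=
  (Matrix.nonneg_iff_posSemidef.1 h).isHermitian

lemma diagw_spec {A : Matrix ι ι ℂ} (h : A.IsHermitian) (j : ι) :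
    diagw (specU A) A j = specL A j := by
  conv_lhs => rw [← spec_eq h]
  rw [spec_eq h]
  have := diagw_sdiag (specU_uni A) (specL A) j
  rwa [spec_eq h] at this

lemma specL_nonneg {A : Matrix ι ι ℂ} (h : 0 ≤ A) (j : ι) : 0 ≤ specL A j := by
  rw [← diagw_spec (psd_herm h)]; exact diagw_nonneg _ h j

lemma sum_specL {A : Matrix ι ι ℂ} (h : A.IsHermitian) : ∑ j, specL A j = rtr A := by
  simp_rw [← diagw_spec h]; exact sum_diagw (specU_uni A) A

lemma matFun_eq {A : Matrix ι ι ℂ} (f : ℝ → ℝ) (h : A.IsHermitian) :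
    matFun f A = sdiag (specU A) (fun j => f (specL A j)) := by
  unfold matFun sdiag specU specL
  simp only [h, dite_true]
  rfl

lemma aeval_sdiag {U : Matrix ι ι ℂ} (hU : IsUni U) (g : ι → ℝ) (p : Polynomial ℝ) :
    Polynomial.aeval (sdiag U g) p = sdiag U (fun j => p.eval (g j)) := by
  induction p using Polynomial.induction_on' with
  | add p q hp hq =>
    rw [map_add, hp, hq]
    have := sdiag_sub U (fun j => (p+q).eval (g j)) (fun j => q.eval (g j))
    simp only [Polynomial.eval_add, add_sub_cancel_right] at this
    rw [this]; simp
  | monomial n a =>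
    have key : sdiag U g ^ n = sdiag U (fun j => g j ^ n) := by
      induction n with
      | zero => simp [sdiag_one hU]
      | succ n ih => rw [pow_succ, ih, sdiag_mul hU]; simp [pow_succ]
    rw [Polynomial.aeval_monomial, key]
    simp only [Polynomial.eval_monomial]
    rw [sdiag_smul, Algebra.smul_def]

lemma matFun_sdiag {U : Matrix ι ι ℂ} (hU : IsUni U) (g : ι → ℝ) (f : ℝ → ℝ) :
    matFun f (sdiag U g) = sdiag U (fun j => f (g j)) := by
  have hA : (sdiag U g).IsHermitian := sdiag_herm U g
  rw [matFun_eq f hA]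
  set A := sdiag U g with hAdef
  let S : Finset ℝ := Finset.univ.image g ∪ Finset.univ.image (specL A)
  let p : Polynomial ℝ := Lagrange.interpolate S id f
  have hp : ∀ x ∈ S, p.eval x = f x := fun x hx =>
    Lagrange.eval_interpolate_at_node f (Set.injOn_id _) hx
  have h1 := aeval_sdiag hU g p
  have h2 := aeval_sdiag (specU_uni A) (specL A) p
  rw [spec_eq hA, ← hAdef.symm, h1] at h2
  have e1 : (fun j => p.eval (g j)) = fun j => f (g j) := by
    funext j; exact hp _ (by simp [S])
  have e2 : (fun j => p.eval (specL A j)) = fun j => f (specL A j) := by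
    funext j; exact hp _ (by simp [S])
  rw [e1, e2] at h2
  exact h2.symm

end PartA

section PartB
set_option linter.unusedSectionVars false
open scoped MatrixOrder
open Matrix

variable {k : Type*} [Fintype k] [DecidableEq k] {d : Type*} [Fintype d] [DecidableEq d]

lemma tensorFam_mul (A B : k → Matrix d d ℂ) :
    tensorFam A * tensorFam B = tensorFam (fun a => A a * B a) := by
  ext i j
  simp only [tensorFam, Matrix.mul_apply, Matrix.of_apply]
  rw [Finset.prod_univ_sum, Fintype.piFinset_univ]
  refine Finset.sum_congr rfl fun l _ => ?_
  rw [Finset.prod_mul_distrib]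

lemma tensorFam_conjTranspose (A : k → Matrix d d ℂ) :
    (tensorFam A)ᴴ = tensorFam (fun a => (A a)ᴴ) := by
  ext i j
  simp [tensorFam, Matrix.conjTranspose_apply]

lemma tensorFam_diagonal (g : k → d → ℝ) :
    tensorFam (fun a => Matrix.diagonal (fun j => (g a j : ℂ)))
      = Matrix.diagonal (fun j : k → d => ((∏ a, g a (j a) : ℝ) : ℂ)) := by
  ext i j
  simp only [tensorFam, Matrix.of_apply, Matrix.diagonal_apply]
  by_cases h : i = j
  · subst h; simp
  · rw [if_neg h]
    obtain ⟨a, ha⟩ := Function.ne_iff.1 h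
    exact Finset.prod_eq_zero (Finset.mem_univ a) (by simp [ha])

lemma tensorFam_one : tensorFam (fun _ : k => (1 : Matrix d d ℂ)) = 1 := by
  have := tensorFam_diagonal (fun (_ : k) (_ : d) => (1:ℝ))
  simpa using this

lemma tensorFam_uni {U : k → Matrix d d ℂ} (hU : ∀ a, IsUni (U a)) : IsUni (tensorFam U) := by
  constructor
  · rw [tensorFam_conjTranspose, tensorFam_mul]
    simp only [(hU _).1]; exact tensorFam_one
  · rw [tensorFam_conjTranspose, tensorFam_mul]
    simp only [(hU _).2]; exact tensorFam_one

lemma tensorFam_sdiag (U : k → Matrix d d ℂ) (g : k → d → ℝ) :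
    tensorFam (fun a => sdiag (U a) (g a)) = sdiag (tensorFam U) (fun j => ∏ a, g a (j a)) := by
  unfold sdiag
  rw [← tensorFam_diagonal, tensorFam_conjTranspose, tensorFam_mul, tensorFam_mul]

lemma tensorFam_spec {A : k → Matrix d d ℂ} (h : ∀ a, (A a).IsHermitian) :
    tensorFam A = sdiag (tensorFam fun a => specU (A a)) (fun j => ∏ a, specL (A a) (j a)) := by
  rw [← tensorFam_sdiag]
  congr; funext a; exact (spec_eq (h a)).symm

lemma tensorFam_psd {A : k → Matrix d d ℂ} (h : ∀ a, 0 ≤ A a) : 0 ≤ tensorFam A := by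
  rw [tensorFam_spec fun a => psd_herm (h a)]
  exact sdiag_psd _ fun j => Finset.prod_nonneg fun a _ => specL_nonneg (h a) _

lemma tensorFam_trace (A : k → Matrix d d ℂ) : (tensorFam A).trace = ∏ a, (A a).trace := by
  simp only [Matrix.trace, Matrix.diag, tensorFam, Matrix.of_apply]
  rw [Finset.prod_univ_sum, Fintype.piFinset_univ]

lemma tensorFam_sum {σ : Type*} (S : k → Finset σ) (c : k → σ → ℝ) (A : k → σ → Matrix d d ℂ) :
    tensorFam (fun a => ∑ s ∈ S a, c a s • A a s)
      = ∑ sv ∈ Fintype.piFinset S, (∏ a, c a (sv a)) • tensorFam (fun a => A a (sv a)) := by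
  ext i j
  simp only [tensorFam, Matrix.of_apply, Matrix.sum_apply, Matrix.smul_apply]
  rw [Finset.prod_univ_sum]
  refine Finset.sum_congr rfl fun sv _ => ?_
  simp [Finset.prod_mul_distrib]

lemma tensorFam_mono {A B : k → Matrix d d ℂ} (hA : ∀ a, 0 ≤ A a) (h : ∀ a, A a ≤ B a) :
    tensorFam A ≤ tensorFam B := by
  have e : B = fun a => ∑ s ∈ (Finset.univ : Finset Bool), (1:ℝ) • (if s then A a else B a - A a) := by
    funext a; simp
  rw [e, tensorFam_sum (fun _ : k => (Finset.univ : Finset Bool)) (fun _ _ => (1:ℝ))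
    (fun a s => if s then A a else B a - A a)]
  have : tensorFam A = (fun sv : k → Bool => (∏ a : k, (1:ℝ)) • tensorFam (fun a => if sv a then A a else B a - A a)) (fun _ => true) := by
    simp
  rw [this]
  refine Finset.single_le_sum (f := (fun sv : k → Bool => (∏ a : k, (1:ℝ)) • tensorFam (fun a => if sv a then A a else B a - A a))) (fun sv _ => ?_) (by simp)
  refine smul_psd (by simp) (tensorFam_psd fun a => ?_)
  split_ifs
  · exact hA a
  · exact sub_nonneg.2 (h a)

lemma tensorFam_smul (c : ℝ) (A : k → Matrix d d ℂ) :
    tensorFam (fun a => c • A a) = c ^ (Fintype.card k) • tensorFam A := by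
  ext i j
  simp [tensorFam, Finset.prod_mul_distrib]

lemma diagw_tensor (U : k → Matrix d d ℂ) {A : k → Matrix d d ℂ} (hA : ∀ a, 0 ≤ A a)
    (j : k → d) : diagw (tensorFam U) (tensorFam A) j = ∏ a, diagw (U a) (A a) (j a) := by
  unfold diagw
  rw [tensorFam_conjTranspose, tensorFam_mul, tensorFam_mul]
  simp only [tensorFam, Matrix.of_apply]
  have : ∀ a, ((U a)ᴴ * A a * U a) (j a) (j a) = ((((U a)ᴴ * A a * U a) (j a) (j a)).re : ℂ) := by
    intro a
    have := (Matrix.nonneg_iff_posSemidef.1 (psd_conj (hA a) (U a))).diag_nonneg (i := j a)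
    have := (Complex.le_def.1 this).2
    apply Complex.ext <;> simp at this ⊢
    exact this.symm
  rw [Finset.prod_congr rfl fun a _ => this a, ← Complex.ofReal_prod, Complex.ofReal_re]

lemma density_psd {A : Matrix d d ℂ} (h : IsDensity A) : 0 ≤ A :=
  Matrix.nonneg_iff_posSemidef.2 h.1

lemma density_rtr {A : Matrix d d ℂ} (h : IsDensity A) : rtr A = 1 := by
  simp [rtr, h.2]

lemma density_tensor {A : k → Matrix d d ℂ} (h : ∀ a, IsDensity (A a)) :
    IsDensity (tensorFam A) :=
  ⟨Matrix.nonneg_iff_posSemidef.1 (tensorFam_psd fun a => density_psd (h a)), by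
    rw [tensorFam_trace]; simp [(h _).2]⟩

lemma density_sum {σ : Type*} (S : Finset σ) {c : σ → ℝ} {A : σ → Matrix d d ℂ}
    (hc : ∀ s ∈ S, 0 ≤ c s) (hc1 : ∑ s ∈ S, c s = 1) (hA : ∀ s, IsDensity (A s)) :
    IsDensity (∑ s ∈ S, c s • A s) := by
  constructor
  · rw [← Matrix.nonneg_iff_posSemidef]
    exact Finset.sum_nonneg fun s hs => smul_psd (hc s hs) (density_psd (hA s))
  · rw [Matrix.trace_sum]
    simp only [Matrix.trace_smul, (hA _).2]
    rw [← Finset.sum_smul, hc1, one_smul]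

/-- von Neumann entropy in nats -/
def ent (A : Matrix d d ℂ) : ℝ := ∑ j, Real.negMulLog (specL A j)

lemma negMulLog_le_one' {x : ℝ} (hx : 0 ≤ x) : Real.negMulLog x ≤ 1 := by
  have := Real.negMulLog_le_one_sub_self hx
  linarith

lemma specL_le_one {A : Matrix d d ℂ} (h : IsDensity A) (j : d) : specL A j ≤ 1 := by
  rw [← density_rtr h, ← sum_specL (psd_herm (density_psd h))]
  exact Finset.single_le_sum (f := specL A) (fun j _ => specL_nonneg (density_psd h) j) (Finset.mem_univ j)

lemma ent_le {A : Matrix d d ℂ} (h : IsDensity A) : ent A ≤ Fintype.card d := by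
  unfold ent
  calc _ ≤ ∑ j : d, (1:ℝ) :=
        Finset.sum_le_sum fun j _ => negMulLog_le_one' (specL_nonneg (density_psd h) j)
    _ = _ := by simp

lemma ent_nonneg {A : Matrix d d ℂ} (h : IsDensity A) : 0 ≤ ent A :=
  Finset.sum_nonneg fun j _ => Real.negMulLog_nonneg (specL_nonneg (density_psd h) j)
    (specL_le_one h j)

end PartB

section PartC
set_option linter.unusedSectionVars false
open scoped MatrixOrder
open Matrix

variable {X : Type*} [Fintype X] [DecidableEq X] {d : Type*} [Fintype d] [DecidableEq d]

lemma cqState_mul (w w' : X → ℝ) (A B : X → Matrix d d ℂ) :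
    cqState w A * cqState w' B = cqState (fun x => w x * w' x) (fun x => A x * B x) := by
  ext ⟨x, i⟩ ⟨y, j⟩
  simp only [cqState, Matrix.mul_apply, Matrix.of_apply, Fintype.sum_prod_type]
  by_cases h : x = y
  · subst h
    rw [Finset.sum_eq_single x]
    · simp only [if_true, Finset.mul_sum]
      refine Finset.sum_congr rfl fun l _ => ?_
      push_cast; ring
    · intro z _ hz
      simp [Ne.symm hz]
    · simp
  · rw [if_neg h, zero_mul]
    refine Finset.sum_eq_zero fun z _ => Finset.sum_eq_zero fun l _ => ?_
    by_cases h1 : x = z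
    · subst h1; simp [h]
    · simp [h1]

lemma cqState_conjTranspose (w : X → ℝ) (A : X → Matrix d d ℂ) :
    (cqState w A)ᴴ = cqState w (fun x => (A x)ᴴ) := by
  ext ⟨x, i⟩ ⟨y, j⟩
  simp only [cqState, Matrix.conjTranspose_apply, Matrix.of_apply]
  by_cases h : x = y
  · subst h; simp
  · simp [h, Ne.symm h]

lemma cqState_diagonal (w : X → ℝ) (g : X → d → ℝ) :
    cqState w (fun x => Matrix.diagonal (fun j => (g x j : ℂ)))
      = Matrix.diagonal (fun p : X × d => ((w p.1 * g p.1 p.2 : ℝ) : ℂ)) := by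
  ext ⟨x, i⟩ ⟨y, j⟩
  simp only [cqState, Matrix.of_apply, Matrix.diagonal_apply, Prod.mk.injEq]
  by_cases h : x = y
  · subst h
    by_cases h2 : i = j <;> simp [h2]
  · simp [h]

lemma cqState_one : cqState (fun _ : X => 1) (fun _ => (1 : Matrix d d ℂ)) = 1 := by
  have := cqState_diagonal (fun _ : X => (1:ℝ)) (fun _ (_ : d) => (1:ℝ))
  simpa using this

lemma cqState_uni {U : X → Matrix d d ℂ} (hU : ∀ a, IsUni (U a)) :
    IsUni (cqState (fun _ => 1) U) := by
  constructor
  · rw [cqState_conjTranspose, cqState_mul]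
    simp only [(hU _).1, mul_one]; exact cqState_one
  · rw [cqState_conjTranspose, cqState_mul]
    simp only [(hU _).2, mul_one]; exact cqState_one

lemma cqState_sdiag (w : X → ℝ) (U : X → Matrix d d ℂ) (g : X → d → ℝ) :
    cqState w (fun x => sdiag (U x) (g x))
      = sdiag (cqState (fun _ => 1) U) (fun p => w p.1 * g p.1 p.2) := by
  unfold sdiag
  rw [← cqState_diagonal, cqState_conjTranspose, cqState_mul, cqState_mul]
  simp

lemma cqState_spec (w : X → ℝ) {A : X → Matrix d d ℂ} (h : ∀ a, (A a).IsHermitian) :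
    cqState w A = sdiag (cqState (fun _ => 1) fun a => specU (A a))
      (fun p => w p.1 * specL (A p.1) p.2) := by
  rw [← cqState_sdiag w (fun a => specU (A a)) (fun a => specL (A a))]
  congr; funext a; exact (spec_eq (h a)).symm

lemma diagw_cqState (w : X → ℝ) (U A : X → Matrix d d ℂ) (p : X × d) :
    diagw (cqState (fun _ => 1) U) (cqState w A) p = w p.1 * diagw (U p.1) (A p.1) p.2 := by
  unfold diagw
  rw [cqState_conjTranspose, cqState_mul, cqState_mul]
  simp [cqState]

lemma flog_eq {u : ℝ} (hu : 0 ≤ u) :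
    (if u ≤ 0 then 0 else Real.logb 2 u) * Real.log 2 = Real.log u := by
  have h2 : Real.log 2 ≠ 0 := (Real.log_pos (by norm_num)).ne'
  split_ifs with h
  · have : u = 0 := le_antisymm h hu
    simp [this]
  · rw [Real.logb, div_mul_cancel₀ _ h2]

lemma relEnt_cq {P : X → ℝ} (hP : ∀ x, 0 ≤ P x) {τ : X → Matrix d d ℂ}
    (hτ : ∀ x, IsDensity (τ x)) (hσ : IsDensity (∑ x, P x • τ x)) :
    relEnt (cqState P τ) (cqState P (fun _ => ∑ x, P x • τ x)) * Real.log 2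
      = ent (∑ x, P x • τ x) - ∑ x, P x * ent (τ x) := by
  set σ := ∑ x, P x • τ x with hσdef
  have hh : ∀ x, (τ x).IsHermitian := fun x => psd_herm (density_psd (hτ x))
  have hs : σ.IsHermitian := psd_herm (density_psd hσ)
  have e1 : mlog2 (cqState P τ) = sdiag (cqState (fun _ => 1) fun a => specU (τ a))
      (fun p => if P p.1 * specL (τ p.1) p.2 ≤ 0 then 0
        else Real.logb 2 (P p.1 * specL (τ p.1) p.2)) := by
    unfold mlog2
    rw [cqState_spec P hh, matFun_sdiag (cqState_uni fun x => specU_uni _)]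
  have e2 : mlog2 (cqState P (fun _ => σ)) = sdiag (cqState (fun _ => 1) fun _ => specU σ)
      (fun p => if P p.1 * specL σ p.2 ≤ 0 then 0
        else Real.logb 2 (P p.1 * specL σ p.2)) := by
    unfold mlog2
    rw [cqState_spec P (A := fun _ => σ) (fun _ => hs), matFun_sdiag (cqState_uni fun x => specU_uni _)]
  have e3 : relEnt (cqState P τ) (cqState P (fun _ => σ))
      = rtr (cqState P τ * mlog2 (cqState P τ)) - rtr (cqState P τ * mlog2 (cqState P (fun _ => σ))) := by
    rw [← rtr_sub, ← Matrix.mul_sub]; rfl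
  rw [e3, e1, e2, rtr_mul_sdiag, rtr_mul_sdiag]
  simp only [diagw_cqState, diagw_spec (hh _)]
  rw [sub_mul, Finset.sum_mul, Finset.sum_mul, Fintype.sum_prod_type, Fintype.sum_prod_type]
  have t1 : ∀ x j, (if P x * specL (τ x) j ≤ 0 then 0 else Real.logb 2 (P x * specL (τ x) j)) *
      (P x * specL (τ x) j) * Real.log 2
      = P x * Real.log (P x) * specL (τ x) j - P x * Real.negMulLog (specL (τ x) j) := by
    intro x j
    rw [mul_right_comm, flog_eq (mul_nonneg (hP x) (specL_nonneg (density_psd (hτ x)) j))]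
    by_cases h1 : P x = 0
    · simp [h1]
    by_cases h2 : specL (τ x) j = 0
    · simp [h2]
    rw [Real.log_mul h1 h2, Real.negMulLog]; ring
  have hr : ∀ j, specL σ j = ∑ x, P x * diagw (specU σ) (τ x) j := by
    intro j
    rw [← diagw_spec hs, hσdef, diagw_sum]
    simp_rw [diagw_smul]
  have hnn : ∀ x j, 0 ≤ P x * diagw (specU σ) (τ x) j := fun x j =>
    mul_nonneg (hP x) (diagw_nonneg _ (density_psd (hτ x)) j)
  have t2 : ∀ x j, (if P x * specL σ j ≤ 0 then 0 else Real.logb 2 (P x * specL σ j)) *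
      (P x * diagw (specU σ) (τ x) j) * Real.log 2
      = P x * Real.log (P x) * diagw (specU σ) (τ x) j
        + Real.log (specL σ j) * (P x * diagw (specU σ) (τ x) j) := by
    intro x j
    rw [mul_right_comm, flog_eq (mul_nonneg (hP x) (specL_nonneg (density_psd hσ) j))]
    by_cases h1 : P x = 0
    · simp [h1]
    by_cases h2 : specL σ j = 0
    · have h3 : P x * diagw (specU σ) (τ x) j = 0 := by
        rw [hr] at h2
        exact (Finset.sum_eq_zero_iff_of_nonneg fun x _ => hnn x j).1 h2 x (Finset.mem_univ x)
      have h4 : diagw (specU σ) (τ x) j = 0 := by simpa [h1] using h3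
      simp [h4]
    rw [Real.log_mul h1 h2]; ring
  simp_rw [t1, t2, Finset.sum_sub_distrib, Finset.sum_add_distrib, ← Finset.mul_sum]
  simp_rw [sum_specL (hh _), sum_diagw (specU_uni σ)]
  rw [Finset.sum_comm (f := fun x j => Real.log (specL σ j) * (P x * diagw (specU σ) (τ x) j))]
  simp_rw [← Finset.mul_sum, ← hr]
  simp only [ent, Real.negMulLog]
  have : ∑ j, -specL σ j * Real.log (specL σ j) = - ∑ j, Real.log (specL σ j) * specL σ j := by
    rw [← Finset.sum_neg_distrib]; exact Finset.sum_congr rfl fun j _ => by ring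
  rw [this]; ring

/-- averaged state -/
def rhoQ {𝒳 𝒮 : Type*} {d : ℕ} (ρ : 𝒳 → 𝒮 → Matrix (Fin d) (Fin d) ℂ) (Q : 𝒮 →₀ ℝ) (x : 𝒳) :
    Matrix (Fin d) (Fin d) ℂ := ∑ s ∈ Q.support, Q s • ρ x s

lemma rhoQ_density {𝒳 𝒮 : Type*} {d : ℕ} {ρ : 𝒳 → 𝒮 → Matrix (Fin d) (Fin d) ℂ}
    (hρ : ∀ x s, IsDensity (ρ x s)) (Q : FinProb 𝒮) (x : 𝒳) : IsDensity (rhoQ ρ Q.1 x) :=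
  density_sum _ (fun s _ => Q.2.1 s) Q.2.2 fun s => hρ x s

lemma mutInf_eq {𝒮 : Type*} {d : ℕ} {ρ : X → 𝒮 → Matrix (Fin d) (Fin d) ℂ}
    (hρ : ∀ x s, IsDensity (ρ x s)) (P : ProbDist X) (Q : FinProb 𝒮) :
    mutInfI ρ P.1 Q.1 * Real.log 2
      = ent (∑ x, P.1 x • rhoQ ρ Q.1 x) - ∑ x, P.1 x * ent (rhoQ ρ Q.1 x) :=
  relEnt_cq P.2.1 (fun x => rhoQ_density hρ Q x)
    (density_sum _ (fun x _ => P.2.1 x) P.2.2 fun x => rhoQ_density hρ Q x)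

end PartC

section PartD
set_option linter.unusedSectionVars false

lemma exp_le_quad (y : ℝ) : Real.exp y ≤ 1 + y + y ^ 2 * Real.exp |y| := by
  have h := Complex.norm_exp_sub_sum_le_norm_mul_exp (y : ℂ) 2
  have e : Complex.exp (y:ℂ) - ∑ m ∈ Finset.range 2, (y:ℂ) ^ m / (m.factorial : ℂ)
      = ((Real.exp y - (1 + y) : ℝ) : ℂ) := by
    simp [Finset.sum_range_succ]
  rw [e, Complex.norm_real, Complex.norm_real] at h
  have := (abs_le.1 h).2
  simp only [Real.norm_eq_abs, sq_abs] at this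
  linarith

lemma moment_bound {α : Type*} [Fintype α] (w Z : α → ℝ) (hw : ∀ a, 0 ≤ w a)
    (hw1 : ∑ a, w a = 1) {K : ℝ} (hK : ∑ a, w a * (Z a ^ 2 * Real.exp (|Z a| / 2)) ≤ K)
    {s : ℝ} (hs : 0 ≤ s) (hs2 : s ≤ 1 / 2) :
    ∑ a, w a * Real.exp (s * Z a) ≤ Real.exp (s * ∑ a, w a * Z a + s ^ 2 * K) := by
  have h1 : ∀ a, w a * Real.exp (s * Z a)
      ≤ w a + s * (w a * Z a) + s ^ 2 * (w a * (Z a ^ 2 * Real.exp (|Z a| / 2))) := by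
    intro a
    have h2 := exp_le_quad (s * Z a)
    have h3 : Real.exp |s * Z a| ≤ Real.exp (|Z a| / 2) := by
      apply Real.exp_le_exp.2
      rw [abs_mul, abs_of_nonneg hs]
      nlinarith [abs_nonneg (Z a)]
    have h4 : Real.exp (s * Z a) ≤ 1 + s * Z a + s ^ 2 * (Z a ^ 2 * Real.exp (|Z a| / 2)) := by
      calc _ ≤ _ := h2
        _ ≤ 1 + s * Z a + (s * Z a) ^ 2 * Real.exp (|Z a| / 2) := by gcongr
        _ = _ := by ring
    calc _ ≤ w a * _ := mul_le_mul_of_nonneg_left h4 (hw a)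
      _ = _ := by ring
  calc _ ≤ ∑ a, (w a + s * (w a * Z a) + s ^ 2 * (w a * (Z a ^ 2 * Real.exp (|Z a| / 2)))) :=
        Finset.sum_le_sum fun a _ => h1 a
    _ = 1 + s * ∑ a, w a * Z a + s ^ 2 * ∑ a, w a * (Z a ^ 2 * Real.exp (|Z a| / 2)) := by
        rw [Finset.sum_add_distrib, Finset.sum_add_distrib, hw1, Finset.mul_sum, Finset.mul_sum]
    _ ≤ 1 + s * ∑ a, w a * Z a + s ^ 2 * K := by gcongr
    _ ≤ _ := by
        have := Real.add_one_le_exp (s * ∑ a, w a * Z a + s ^ 2 * K)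
        linarith

/-- exponential rate -/
def rate (δ K : ℝ) : ℝ := min (1 / 2) (δ / (2 * K)) * δ / 2

lemma rate_pos {δ K : ℝ} (hδ : 0 < δ) (hK : 0 < K) : 0 < rate δ K := by
  unfold rate
  have : 0 < min (1 / 2 : ℝ) (δ / (2 * K)) := lt_min (by norm_num) (by positivity)
  positivity

lemma chernoff {k α : Type*} [Fintype k] [DecidableEq k] [Fintype α] (w Z : k → α → ℝ)
    (hw : ∀ i a, 0 ≤ w i a) (hw1 : ∀ i, ∑ a, w i a = 1) {K δ : ℝ} (hK0 : 0 < K) (hδ : 0 < δ)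
    (hK : ∀ i, ∑ a, w i a * (Z i a ^ 2 * Real.exp (|Z i a| / 2)) ≤ K)
    (p : (k → α) → Prop) [DecidablePred p]
    (hp : ∀ j, p j → (∀ i, w i (j i) ≠ 0) →
      ∑ i, ∑ a, w i a * Z i a + Fintype.card k * δ ≤ ∑ i, Z i (j i)) :
    ∑ j, (if p j then 1 else 0) * ∏ i, w i (j i) ≤ Real.exp (-(Fintype.card k * rate δ K)) := by
  set s := min (1 / 2 : ℝ) (δ / (2 * K)) with hsdef
  have hs0 : 0 < s := lt_min (by norm_num) (by positivity)
  have hs2 : s ≤ 1 / 2 := min_le_left _ _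
  have hs3 : s * K ≤ δ / 2 := by
    have : s ≤ δ / (2 * K) := min_le_right _ _
    calc s * K ≤ δ / (2 * K) * K := by gcongr
      _ = δ / 2 := by field_simp
  set thr := ∑ i, ∑ a, w i a * Z i a + Fintype.card k * δ with hthr
  have h1 : ∀ j, (if p j then 1 else 0) * ∏ i, w i (j i)
      ≤ Real.exp (-(s * thr)) * ∏ i, (w i (j i) * Real.exp (s * Z i (j i))) := by
    intro j
    have hnn : 0 ≤ ∏ i, w i (j i) := Finset.prod_nonneg fun i _ => hw _ _
    rw [Finset.prod_mul_distrib, ← Real.exp_sum, mul_left_comm, ← Real.exp_add, ← Finset.mul_sum]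
    by_cases hpj : p j
    · simp only [hpj, if_true, one_mul]
      by_cases hz : ∀ i, w i (j i) ≠ 0
      · have := hp j hpj hz
        have : 1 ≤ Real.exp (-(s * thr) + s * ∑ i, Z i (j i)) := by
          apply Real.one_le_exp
          nlinarith
        nlinarith
      · push Not at hz
        obtain ⟨i, hi⟩ := hz
        rw [Finset.prod_eq_zero (Finset.mem_univ i) hi]; simp
    · simp only [hpj, if_false, zero_mul]
      positivity
  calc _ ≤ ∑ j, Real.exp (-(s * thr)) * ∏ i, (w i (j i) * Real.exp (s * Z i (j i))) :=
        Finset.sum_le_sum fun j _ => h1 j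
    _ = Real.exp (-(s * thr)) * ∏ i, ∑ a, w i a * Real.exp (s * Z i a) := by
        rw [← Finset.mul_sum, Finset.prod_univ_sum, Fintype.piFinset_univ]
    _ ≤ Real.exp (-(s * thr)) * ∏ i, Real.exp (s * ∑ a, w i a * Z i a + s ^ 2 * K) := by
        refine mul_le_mul_of_nonneg_left (Finset.prod_le_prod (fun i _ => ?_) fun i _ => ?_)
          (Real.exp_pos _).le
        · exact Finset.sum_nonneg fun a _ => mul_nonneg (hw i a) (Real.exp_pos _).le
        · exact moment_bound _ _ (hw i) (hw1 i) (hK i) hs0.le hs2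
    _ = Real.exp (-(s * thr) + ∑ i, (s * ∑ a, w i a * Z i a + s ^ 2 * K)) := by
        rw [← Real.exp_sum, ← Real.exp_add]
    _ ≤ _ := by
        apply Real.exp_le_exp.2
        rw [Finset.sum_add_distrib, ← Finset.mul_sum, hthr, Finset.sum_const, Finset.card_univ,
          nsmul_eq_mul]
        unfold rate
        rw [← hsdef]
        have hc : (0:ℝ) ≤ Fintype.card k := Nat.cast_nonneg _
        have : (Fintype.card k : ℝ) * (s * (s * K)) ≤ Fintype.card k * (s * (δ / 2)) := by gcongr
        nlinarith

lemma k16 {l : ℝ} (h0 : 0 ≤ l) (h1 : l ≤ 1) :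
    l * (Real.log l ^ 2 * Real.exp (|Real.log l| / 2)) ≤ 16 := by
  rcases h0.eq_or_lt with h | h
  · rw [← h]; norm_num
  set y := - Real.log l with hy
  have hy0 : 0 ≤ y := by rw [hy]; linarith [Real.log_nonpos h0 h1]
  have hl : l = Real.exp (-y) := by rw [hy, neg_neg, Real.exp_log h]
  have hlog : Real.log l = -y := by rw [hy]; ring
  rw [hlog, hl, abs_neg, abs_of_nonneg hy0]
  have h2 : y / 4 ≤ Real.exp (y / 4) := by linarith [Real.add_one_le_exp (y / 4)]
  have h3 : y ^ 2 ≤ 16 * Real.exp (y / 2) := by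
    have : Real.exp (y / 2) = Real.exp (y / 4) ^ 2 := by
      rw [← Real.exp_nat_mul]; congr 1; push_cast; ring
    rw [this]
    nlinarith [Real.exp_pos (y/4)]
  calc Real.exp (-y) * ((-y) ^ 2 * Real.exp (y / 2))
      = y ^ 2 * (Real.exp (-y) * Real.exp (y / 2)) := by ring
    _ = y ^ 2 * Real.exp (-(y / 2)) := by rw [← Real.exp_add]; congr 2; ring
    _ ≤ 16 * Real.exp (y / 2) * Real.exp (-(y / 2)) := by gcongr
    _ = 16 := by rw [mul_assoc, ← Real.exp_add]; simp

lemma kL {α : Type*} [Fintype α] (w Z : α → ℝ) (hw : ∀ a, 0 ≤ w a)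
    (hw1 : ∑ a, w a = 1) {L : ℝ} (hZ : ∀ a, |Z a| ≤ L) :
    ∑ a, w a * (Z a ^ 2 * Real.exp (|Z a| / 2)) ≤ L ^ 2 * Real.exp L := by
  calc _ ≤ ∑ a, w a * (L ^ 2 * Real.exp L) := by
        refine Finset.sum_le_sum fun a _ => mul_le_mul_of_nonneg_left ?_ (hw a)
        have h0 := abs_nonneg (Z a)
        have : Z a ^ 2 ≤ L ^ 2 := by rw [← sq_abs]; exact pow_le_pow_left₀ h0 (hZ a) 2
        refine mul_le_mul this (Real.exp_le_exp.2 ?_) (Real.exp_pos _).le (sq_nonneg L)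
        linarith [hZ a]
    _ = _ := by rw [← Finset.sum_mul, hw1, one_mul]

end PartD

section PartE
set_option linter.unusedSectionVars false
open scoped MatrixOrder
open Matrix
open scoped Matrix.Norms.L2Operator

variable {ι : Type*} [Fintype ι] [DecidableEq ι]

lemma one_psd : (0 : Matrix ι ι ℂ) ≤ 1 := Matrix.PosSemidef.one.nonneg

lemma specL_ge {C : Matrix ι ι ℂ} {c : ℝ} (hC : c • (1 : Matrix ι ι ℂ) ≤ C) (h0 : 0 ≤ C) (j : ι) :
    c ≤ specL C j := by
  have h1 := diagw_nonneg (specU C) (sub_nonneg.2 hC) j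
  have h2 : C = (C - c • 1) + c • sdiag (specU C) (fun _ => 1) := by
    rw [sdiag_one (specU_uni C)]; abel
  have h3 := diagw_spec (psd_herm h0) j
  rw [← h3]
  have h4 : diagw (specU C) C j = diagw (specU C) (C - c • 1) j + c := by
    calc diagw (specU C) C j = diagw (specU C) ((C - c • 1) + c • sdiag (specU C) (fun _ => 1)) j := by
          rw [← h2]
      _ = _ := by rw [diagw_add, diagw_smul, diagw_sdiag (specU_uni C), mul_one]
  linarith

/-- positive square root data -/
lemma sqrt_data {C : Matrix ι ι ℂ} {c : ℝ} (hc : 0 < c) (hC : c • (1 : Matrix ι ι ℂ) ≤ C)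
    (h0 : 0 ≤ C) :
    ∃ R Y : Matrix ι ι ℂ, 0 ≤ R ∧ 0 ≤ Y ∧ R * R = C ∧ Y * R = 1 ∧ R * Y = 1 := by
  have hU := specU_uni C
  have hL : ∀ j, 0 < specL C j := fun j => lt_of_lt_of_le hc (specL_ge hC h0 j)
  refine ⟨sdiag (specU C) (fun j => √(specL C j)), sdiag (specU C) (fun j => (√(specL C j))⁻¹),
    sdiag_psd _ fun j => by positivity, sdiag_psd _ fun j => by positivity, ?_, ?_, ?_⟩
  · rw [sdiag_mul hU]
    conv_rhs => rw [← spec_eq (psd_herm h0)]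
    congr 1; funext j; exact Real.mul_self_sqrt (hL j).le
  · rw [sdiag_mul hU, ← sdiag_one hU]
    congr 1; funext j; exact inv_mul_cancel₀ (Real.sqrt_pos.2 (hL j)).ne'
  · rw [sdiag_mul hU, ← sdiag_one hU]
    congr 1; funext j; exact mul_inv_cancel₀ (Real.sqrt_pos.2 (hL j)).ne'

lemma sq_le_of {S : Matrix ι ι ℂ} (h0 : 0 ≤ S) (h1 : S ≤ 1) : S * S ≤ S := by
  obtain ⟨R, hR, hRS⟩ : ∃ R : Matrix ι ι ℂ, 0 ≤ R ∧ R * R = S :=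
    ⟨CFC.sqrt S, CFC.sqrt_nonneg S, CFC.sqrt_mul_sqrt_self S h0⟩
  have := conj_mono h1 R
  rw [(psd_herm hR).eq] at this
  rw [mul_one, hRS] at this
  calc S * S = R * S * R := by rw [← hRS]; noncomm_ring
    _ ≤ S := this

lemma le_of_sq {S R : Matrix ι ι ℂ} (hS : 0 ≤ S) (hR : 0 ≤ R) (h : S * S ≤ R * R) : S ≤ R := by
  have := CFC.sqrt_le_sqrt _ _ h
  rwa [CFC.sqrt_mul_self S hS, CFC.sqrt_mul_self R hR] at this

lemma hn_core {S T Y R : Matrix ι ι ℂ} (hS : 0 ≤ S) (hS1 : S ≤ 1) (hT : 0 ≤ T)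
    (hR : 0 ≤ R) (hY : 0 ≤ Y) (hRR : R * R = S + T) (hYR : Y * R = 1) (hRY : R * Y = 1) :
    1 - Y * S * Y ≤ (2 : ℝ) • (1 - S) + (4 : ℝ) • T := by
  have hyh : Yᴴ = Y := (psd_herm hY).eq
  have hYC : Y * (S + T) * Y = 1 := by
    rw [← hRR]
    calc Y * (R * R) * Y = (Y * R) * (R * Y) := by noncomm_ring
      _ = 1 := by rw [hYR, hRY, mul_one]
  have e1 : 1 - Y * S * Y = Y * T * Y := by
    rw [← hYC]; noncomm_ring
  rw [e1]
  have hy2 : (Y - 2)ᴴ = Y - 2 := by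
    rw [conjTranspose_sub, hyh]; congr 1
    have : (2 : Matrix ι ι ℂ) = 1 + 1 := by norm_num
    rw [this, conjTranspose_add, conjTranspose_one]
  have hy1 : (Y - 1)ᴴ = Y - 1 := by
    rw [conjTranspose_sub, hyh, conjTranspose_one]
  have a1 := psd_conj hT (Y - 2)
  rw [hy2] at a1
  have a2 := conj_mono (le_add_of_nonneg_left hS : T ≤ S + T) (Y - 1)
  rw [hy1] at a2
  have e2 : (Y - 1) * (S + T) * (Y - 1) = 1 - R - R + (S + T) := by
    calc (Y - 1) * (S + T) * (Y - 1) = Y * (S + T) * Y - Y * (S + T) - (S + T) * Y + (S + T) := by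
          noncomm_ring
      _ = 1 - (Y * R) * R - R * (R * Y) + (S + T) := by
          rw [hYC, ← hRR]; noncomm_ring
      _ = _ := by rw [hYR, hRY]; noncomm_ring
  rw [e2] at a2
  have a3 : S ≤ R := le_of_sq hS hR (by
    rw [hRR]; exact (sq_le_of hS hS1).trans (le_add_of_nonneg_right hT))
  have e3 : Y * T * Y = (2:ℝ) • ((Y - 1) * T * (Y - 1)) + (2:ℝ) • T - (Y - 2) * T * (Y - 2) := by
    simp only [two_smul]
    noncomm_ring
  calc Y * T * Y ≤ (2:ℝ) • ((Y - 1) * T * (Y - 1)) + (2:ℝ) • T := by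
        rw [e3]; exact sub_le_self _ a1
    _ ≤ (2:ℝ) • (1 - R - R + (S + T)) + (2:ℝ) • T := by
        exact add_le_add_left (smul_mono (by norm_num) a2) _
    _ ≤ (2:ℝ) • (1 - S - S + (S + T)) + (2:ℝ) • T := by
        refine add_le_add_left (smul_mono (by norm_num) ?_) _
        gcongr
    _ = _ := by
        module

lemma hn {M : ℕ} (hM : 0 < M) (T : Fin M → Matrix ι ι ℂ) (hT : ∀ m, 0 ≤ T m) (hT1 : ∀ m, T m ≤ 1)
    {η : ℝ} (hη : 0 < η) :
    ∃ D : Fin M → Matrix ι ι ℂ, (∀ m, 0 ≤ D m) ∧ (∑ m, D m = 1) ∧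
      ∀ m, 1 - D m ≤ (2 : ℝ) • (1 - T m) +
        (4 : ℝ) • (∑ m' ∈ Finset.univ.erase m, T m' + η • (1 : Matrix ι ι ℂ)) := by
  have hs : 0 ≤ ∑ m, T m := Finset.sum_nonneg fun m _ => hT m
  obtain ⟨R, Y, hR, hY, hRR, hYR, hRY⟩ := sqrt_data (C := ∑ m, T m + η • 1) hη
    (le_add_of_nonneg_left hs) (add_nonneg hs (smul_psd hη.le one_psd))
  have hyh : Yᴴ = Y := (psd_herm hY).eq
  let m0 : Fin M := ⟨0, hM⟩
  have hextra : 0 ≤ Y * (η • (1 : Matrix ι ι ℂ)) * Y := by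
    have := psd_conj (smul_psd hη.le (one_psd (ι := ι))) Y
    rwa [hyh] at this
  have hex : ∀ m, 0 ≤ (if m = m0 then Y * (η • (1 : Matrix ι ι ℂ)) * Y else 0) := by
    intro m; split_ifs
    · exact hextra
    · exact le_rfl
  refine ⟨fun m => Y * T m * Y + if m = m0 then Y * (η • 1) * Y else 0, ?_, ?_, ?_⟩
  · intro m
    have := psd_conj (hT m) Y
    rw [hyh] at this
    exact add_nonneg this (hex m)
  · rw [Finset.sum_add_distrib, Finset.sum_ite_eq' Finset.univ m0]
    simp only [Finset.mem_univ, if_true]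
    rw [← Finset.sum_mul, ← Finset.mul_sum, ← add_mul, ← mul_add, ← hRR]
    calc Y * (R * R) * Y = (Y * R) * (R * Y) := by noncomm_ring
      _ = 1 := by rw [hYR, hRY, mul_one]
  · intro m
    have h1 := hn_core (S := T m) (T := ∑ m' ∈ Finset.univ.erase m, T m' + η • 1) (hT m) (hT1 m)
      (add_nonneg (Finset.sum_nonneg fun m _ => hT m) (smul_psd hη.le one_psd)) hR hY
      (by rw [hRR, ← Finset.add_sum_erase _ _ (Finset.mem_univ m), add_assoc]) hYR hRY
    refine le_trans ?_ h1
    exact sub_le_sub_left (le_add_of_nonneg_right (hex m)) _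

lemma inv_data {C : Matrix ι ι ℂ} {c : ℝ} (hc : 0 < c) (hC : c • (1 : Matrix ι ι ℂ) ≤ C)
    (h0 : 0 ≤ C) :
    ∃ u : (Matrix ι ι ℂ)ˣ, (u : Matrix ι ι ℂ) = C := by
  obtain ⟨R, Y, hR, hY, hRR, hYR, hRY⟩ := sqrt_data hc hC h0
  refine ⟨⟨C, Y * Y, ?_, ?_⟩, rfl⟩
  · rw [← hRR]
    calc R * R * (Y * Y) = R * (R * Y) * Y := by noncomm_ring
      _ = 1 := by rw [hRY, mul_one, hRY]
  · rw [← hRR]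
    calc Y * Y * (R * R) = Y * (Y * R) * R := by noncomm_ring
      _ = 1 := by rw [hYR, mul_one, hYR]

/-- union test -/
lemma union_test {κ : Type*} (s : Finset κ) (T : κ → Matrix ι ι ℂ) (hT : ∀ t, 0 ≤ T t)
    (hT1 : ∀ t, T t ≤ 1) {c : ℝ} (hc : 0 < c) :
    ∃ W : Matrix ι ι ℂ, 0 ≤ W ∧ W ≤ 1 ∧ c • W ≤ ∑ t ∈ s, T t ∧
      ∀ t ∈ s, 1 - W ≤ (1 - T t) + c • (1 : Matrix ι ι ℂ) := by
  have hs : 0 ≤ ∑ m ∈ s, T m := Finset.sum_nonneg fun m _ => hT m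
  have hc1 : 0 ≤ c • (1 : Matrix ι ι ℂ) := smul_psd hc.le one_psd
  obtain ⟨u, hu⟩ := inv_data (C := ∑ m ∈ s, T m + c • 1) hc
    (le_add_of_nonneg_left hs) (add_nonneg hs hc1)
  have hu0 : 0 ≤ (u : Matrix ι ι ℂ) := by rw [hu]; exact add_nonneg hs hc1
  set V : Matrix ι ι ℂ := ((u⁻¹ : (Matrix ι ι ℂ)ˣ) : Matrix ι ι ℂ) with hV
  have hV0 : 0 ≤ V := CFC.inv_nonneg_of_nonneg u hu0
  have hVh : Vᴴ = V := (psd_herm hV0).eq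
  have hVu : V * (∑ m ∈ s, T m + c • 1) = 1 := by rw [← hu]; exact u.inv_mul
  have huV : (∑ m ∈ s, T m + c • 1) * V = 1 := by rw [← hu]; exact u.mul_inv
  set S := ∑ m ∈ s, T m with hS
  -- c V ≤ 1
  have key : ∀ A : Matrix ι ι ℂ, 0 ≤ A → A ≤ S → ∃ v : (Matrix ι ι ℂ)ˣ, (v : Matrix ι ι ℂ) = A + c • 1 ∧
      V ≤ ((v⁻¹ : (Matrix ι ι ℂ)ˣ) : Matrix ι ι ℂ) := by
    intro A hA hAS
    obtain ⟨v, hv⟩ := inv_data (C := A + c • 1) hc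
      (le_add_of_nonneg_left hA) (add_nonneg hA hc1)
    refine ⟨v, hv, ?_⟩
    refine CStarAlgebra.inv_le_inv ?_ ?_
    · rw [hv]; exact add_nonneg hA hc1
    · rw [hv, hu]; gcongr
  have bound : ∀ A : Matrix ι ι ℂ, 0 ≤ A → A ≤ S → A ≤ 1 → c • V ≤ 1 - A + c • 1 := by
    intro A hA hAS hA1
    obtain ⟨v, hv, hvV⟩ := key A hA hAS
    refine (smul_mono hc.le hvV).trans ?_
    set N : Matrix ι ι ℂ := ((v⁻¹ : (Matrix ι ι ℂ)ˣ) : Matrix ι ι ℂ) with hN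
    have hv0 : 0 ≤ (v : Matrix ι ι ℂ) := by rw [hv]; exact add_nonneg hA hc1
    have hN0 : 0 ≤ N := CFC.inv_nonneg_of_nonneg v hv0
    have hNh : Nᴴ = N := (psd_herm hN0).eq
    have h1 : N * (A + c • 1) = 1 := by rw [← hv]; exact v.inv_mul
    have h2 : (A + c • 1) * N = 1 := by rw [← hv]; exact v.mul_inv
    -- c N = 1 - N A ; want c N ≤ 1 - A + c
    have e1 : N * A = 1 - c • N := by
      rw [← h1]; simp [mul_add]
    have e2 : A * N = 1 - c • N := by
      rw [← h2]; simp [add_mul]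
    have hX : 0 ≤ (A - A * A) + (c * c) • (1 : Matrix ι ι ℂ) :=
      add_nonneg (sub_nonneg.2 (sq_le_of hA hA1)) (smul_psd (mul_nonneg hc.le hc.le) one_psd)
    have hcA : Commute N A := by
      rw [Commute, SemiconjBy, e1, e2]
    have hcX : Commute N ((A - A * A) + (c * c) • (1 : Matrix ι ι ℂ)) :=
      (hcA.sub_right (hcA.mul_right hcA)).add_right ((Commute.one_right N).smul_right _)
    have p := Commute.mul_nonneg hN0 hX hcX
    have e3 : N * ((A - A * A) + (c * c) • (1 : Matrix ι ι ℂ)) = 1 - A + c • 1 - c • N := by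
      calc N * ((A - A * A) + (c * c) • (1 : Matrix ι ι ℂ))
          = N * A - (N * A) * A + (c * c) • N := by
            rw [mul_add, mul_sub, mul_smul_comm, mul_one, mul_assoc]
        _ = (1 - c • N) - (1 - c • N) * A + (c * c) • N := by rw [e1]
        _ = 1 - c • N - A + c • (N * A) + (c * c) • N := by
            rw [sub_mul, one_mul, smul_mul_assoc]; abel
        _ = _ := by rw [e1]; module
    rw [e3] at p
    exact sub_nonneg.1 p
  have e1 : V * S = 1 - c • V := by
    rw [← hVu]; simp [mul_add]
  have e2 : S * V = 1 - c • V := by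
    rw [← huV]; simp [add_mul]
  have hcS : Commute V S := by
    rw [Commute, SemiconjBy, e1, e2]
  refine ⟨1 - c • V, ?_, ?_, ?_, ?_⟩
  · rw [← e1]; exact Commute.mul_nonneg hV0 hs hcS
  · exact sub_le_self _ (smul_psd hc.le hV0)
  · have h2 : 0 ≤ S * S := Commute.mul_nonneg hs hs (Commute.refl S)
    have := Commute.mul_nonneg hV0 h2 (hcS.mul_right hcS)
    have e3 : V * (S * S) = S - c • (1 - c • V) := by
      rw [← mul_assoc, e1, sub_mul, one_mul, smul_mul_assoc, e1]
    rw [e3] at this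
    exact sub_nonneg.1 this
  · intro t ht
    rw [sub_sub_cancel]
    exact bound (T t) (hT t) (Finset.single_le_sum (fun i _ => hT i) ht) (hT1 t)
end PartE

section PartF
set_option linter.unusedSectionVars false

lemma fact_ratio (l m : ℕ) : l ^ m * l.factorial ≤ l ^ l * m.factorial := by
  rcases le_total l m with h | h
  · have := Nat.factorial_mul_pow_sub_le_factorial h
    calc l ^ m * l.factorial = l ^ l * (l.factorial * l ^ (m - l)) := by
          conv_lhs => rw [← Nat.add_sub_cancel' h, pow_add]
          ring
      _ ≤ _ := Nat.mul_le_mul_left _ this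
  · obtain ⟨j, rfl⟩ := Nat.exists_eq_add_of_le h
    have h1 := Nat.ascFactorial_le_pow_add m j
    have h2 := Nat.factorial_mul_ascFactorial m j
    calc (m + j) ^ m * (m + j).factorial = (m + j) ^ m * (m.factorial * (m + 1).ascFactorial j) := by
          rw [h2]
      _ ≤ (m + j) ^ m * (m.factorial * (m + j) ^ j) := by gcongr
      _ = _ := by ring

variable {S : Type*} [Fintype S] [DecidableEq S]

lemma multi_max (t : S → ℕ) :
    (∑ a, t a) ^ (∑ a, t a) ≤ ((∑ a, t a) + 1) ^ Fintype.card S *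
      (Nat.multinomial Finset.univ t * ∏ a, t a ^ t a) := by
  set n := ∑ a, t a with hn
  rw [hn, Finset.sum_pow_eq_sum_piAntidiag, ← hn]
  have hcard : (Finset.univ.piAntidiag n : Finset (S → ℕ)).card ≤ (n + 1) ^ Fintype.card S := by
    have : (Finset.univ.piAntidiag n : Finset (S → ℕ)) ⊆
        Fintype.piFinset (fun _ : S => Finset.range (n + 1)) := by
      intro k hk
      rw [Finset.mem_piAntidiag] at hk
      rw [Fintype.mem_piFinset]
      intro a
      rw [Finset.mem_range, Nat.lt_succ_iff, ← hk.1]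
      exact Finset.single_le_sum (fun _ _ => Nat.zero_le _) (Finset.mem_univ a)
    refine (Finset.card_le_card this).trans ?_
    simp
  refine (Finset.sum_le_card_nsmul _ _ (Nat.multinomial Finset.univ t * ∏ a, t a ^ t a) ?_).trans ?_
  · intro k hk
    rw [Finset.mem_piAntidiag] at hk
    have h1 := Nat.multinomial_spec Finset.univ k
    have h2 := Nat.multinomial_spec Finset.univ t
    rw [hk.1] at h1
    rw [← hn] at h2
    have h3 : (∏ a, t a ^ k a) * (∏ a, (t a).factorial) ≤ (∏ a, t a ^ t a) * ∏ a, (k a).factorial := by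
      rw [← Finset.prod_mul_distrib, ← Finset.prod_mul_distrib]
      exact Finset.prod_le_prod' fun a _ => fact_ratio _ _
    have p1 : 0 < ∏ a, (k a).factorial := Finset.prod_pos fun a _ => Nat.factorial_pos _
    have p2 : 0 < ∏ a, (t a).factorial := Finset.prod_pos fun a _ => Nat.factorial_pos _
    simp only [Nat.cast_id]
    refine Nat.le_of_mul_le_mul_left ?_ (Nat.mul_pos p1 p2)
    calc (∏ a, (k a).factorial) * (∏ a, (t a).factorial) *
          (Nat.multinomial Finset.univ k * ∏ a, t a ^ k a)
        = ((∏ a, (k a).factorial) * Nat.multinomial Finset.univ k) *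
          ((∏ a, t a ^ k a) * (∏ a, (t a).factorial)) := by ring
      _ ≤ n.factorial * ((∏ a, t a ^ t a) * ∏ a, (k a).factorial) := by
          rw [h1]; exact Nat.mul_le_mul_left _ h3
      _ = _ := by rw [← h2]; ring
  · rw [smul_eq_mul]
    exact Nat.mul_le_mul_right _ hcard

variable {k : Type*} [Fintype k] [DecidableEq k]

def cnt (s : k → S) (a : S) : ℕ := Fintype.card {i // s i = a}

lemma sum_cnt (s : k → S) : ∑ a, cnt s a = Fintype.card k := by
  unfold cnt
  rw [← Fintype.card_sigma]
  exact Fintype.card_congr (Equiv.sigmaFiberEquiv s)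

lemma cnt_comp (s : k → S) (π : Equiv.Perm k) (a : S) : cnt (s ∘ π) a = cnt s a := by
  unfold cnt
  exact Fintype.card_congr (π.subtypeEquiv fun i => Iff.rfl)

lemma prod_cnt (s : k → S) (q : S → ℝ) : ∏ i, q (s i) = ∏ a, q a ^ cnt s a := by
  rw [← Finset.prod_fiberwise' Finset.univ s q]
  refine Finset.prod_congr rfl fun a _ => ?_
  rw [Finset.prod_const, cnt, Fintype.card_subtype]

lemma hits_le (s0 s : k → S) :
    (Finset.univ.filter fun π : Equiv.Perm k => s0 ∘ π = s).card ≤ ∏ a, (cnt s0 a).factorial := by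
  by_cases h : ∃ π0 : Equiv.Perm k, s0 ∘ π0 = s
  · obtain ⟨π0, h0⟩ := h
    have e := DomMulAct.stabilizer_card s0
    unfold cnt
    rw [← e, Fintype.card_subtype]
    refine Finset.card_le_card_of_injOn (fun π => π * π0⁻¹) ?_ ?_
    · intro π hπ
      simp only [Finset.coe_filter, Finset.mem_univ, true_and, Set.mem_setOf_eq] at hπ ⊢
      funext i
      have h1 := congrFun (hπ.trans h0.symm) (π0⁻¹ i)
      simpa using h1
    · intro a _ b _ hab
      exact mul_right_cancel hab
  · rw [Finset.filter_eq_empty_iff.2]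
    · simp
    · intro π _ hπ; exact h ⟨π, hπ⟩

/-- empirical distribution -/
def emp (s : k → S) (a : S) : ℝ := (cnt s a : ℝ) / Fintype.card k

lemma emp_nonneg (s : k → S) (a : S) : 0 ≤ emp s a := by unfold emp; positivity

lemma emp_sum [Nonempty k] (s : k → S) : ∑ a, emp s a = 1 := by
  unfold emp
  rw [← Finset.sum_div, ← Nat.cast_sum, sum_cnt, div_self]
  exact_mod_cast Fintype.card_ne_zero

lemma types_avg [Nonempty k] (s0 : k → S) (F : (k → S) → ℝ) (hF : ∀ s, 0 ≤ F s) :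
    (∑ π : Equiv.Perm k, F (s0 ∘ π)) / (Fintype.card k).factorial ≤
      ((Fintype.card k : ℝ) + 1) ^ Fintype.card S * ∑ s, (∏ i, emp s0 (s i)) * F s := by
  set n := Fintype.card k with hn
  have hn0 : 0 < n := Fintype.card_pos
  set N : (k → S) → ℕ := fun s => (Finset.univ.filter fun π : Equiv.Perm k => s0 ∘ π = s).card with hN
  have e1 : ∑ π : Equiv.Perm k, F (s0 ∘ π) = ∑ s, (N s : ℝ) * F s := by
    rw [← Finset.sum_fiberwise' Finset.univ (fun π : Equiv.Perm k => s0 ∘ π) F]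
    refine Finset.sum_congr rfl fun s _ => ?_
    rw [Finset.sum_const, nsmul_eq_mul]
  rw [e1, Finset.sum_div, Finset.mul_sum]
  refine Finset.sum_le_sum fun s _ => ?_
  by_cases hs : N s = 0
  · rw [hs]; simp only [Nat.cast_zero, zero_mul, zero_div]
    have : 0 ≤ ∏ i, emp s0 (s i) := Finset.prod_nonneg fun i _ => emp_nonneg _ _
    have := hF s
    positivity
  · obtain ⟨π, hπ⟩ := Finset.card_pos.1 (Nat.pos_of_ne_zero hs)
    rw [Finset.mem_filter] at hπ
    have h1 : ∏ i, emp s0 (s i) = ∏ a, emp s0 a ^ cnt s0 a := by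
      rw [prod_cnt]
      refine Finset.prod_congr rfl fun a _ => ?_
      rw [← hπ.2, cnt_comp]
    have h2 : (N s : ℝ) ≤ ∏ a, ((cnt s0 a).factorial : ℝ) := by
      exact_mod_cast hits_le s0 s
    have h3 := multi_max (cnt s0)
    rw [sum_cnt, ← hn] at h3
    have h4 := Nat.multinomial_spec Finset.univ (cnt s0)
    rw [sum_cnt, ← hn] at h4
    have h3' : (n : ℝ) ^ n ≤ ((n : ℝ) + 1) ^ Fintype.card S *
      (Nat.multinomial Finset.univ (cnt s0) * ∏ a, (cnt s0 a : ℝ) ^ cnt s0 a) := by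
      exact_mod_cast h3
    have h4' : (∏ a, ((cnt s0 a).factorial : ℝ)) * Nat.multinomial Finset.univ (cnt s0) = n.factorial := by
      exact_mod_cast h4
    have h5 : ∏ a, emp s0 a ^ cnt s0 a = (∏ a, (cnt s0 a : ℝ) ^ cnt s0 a) / (n : ℝ) ^ n := by
      unfold emp
      simp only [div_pow]
      rw [Finset.prod_div_distrib, Finset.prod_pow_eq_pow_sum, sum_cnt]
    rw [h1, h5]
    have hnr : (0 : ℝ) < (n : ℝ) ^ n := by positivity
    have hfr : (0 : ℝ) < n.factorial := by exact_mod_cast Nat.factorial_pos n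
    have h6 : (N s : ℝ) / n.factorial ≤ ((n : ℝ) + 1) ^ Fintype.card S *
        ((∏ a, (cnt s0 a : ℝ) ^ cnt s0 a) / (n : ℝ) ^ n) := by
      rw [← mul_div_assoc, div_le_div_iff₀ hfr hnr]
      calc (N s : ℝ) * (n : ℝ) ^ n ≤ (∏ a, ((cnt s0 a).factorial : ℝ)) * (((n : ℝ) + 1) ^ Fintype.card S *
            (Nat.multinomial Finset.univ (cnt s0) * ∏ a, (cnt s0 a : ℝ) ^ cnt s0 a)) := by
            gcongr
        _ = _ := by rw [← h4']; ring
    calc (N s : ℝ) * F s / n.factorial = (N s : ℝ) / n.factorial * F s := by ring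
      _ ≤ _ := by
        rw [← mul_assoc]
        exact mul_le_mul_of_nonneg_right h6 (hF s)

end PartF

section PartG
set_option linter.unusedSectionVars false
open scoped MatrixOrder
open Matrix

section general
variable {ι : Type*} [Fintype ι] [DecidableEq ι]

lemma pinch {A P P' : Matrix ι ι ℂ} (hA : 0 ≤ A) (hP : Pᴴ = P) (hP' : P'ᴴ = P') (hs : P + P' = 1)
    {η : ℝ} (hη : 0 < η) :
    A ≤ (1 + η) • (P * A * P) + (1 + η⁻¹) • (P' * A * P') := by
  set e := √η with he
  have he0 : 0 < e := Real.sqrt_pos.2 hη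
  have hee : e * e = η := Real.mul_self_sqrt hη.le
  have hei : e⁻¹ * e⁻¹ = η⁻¹ := by rw [← mul_inv, hee]
  have p := psd_conj hA (e • P - e⁻¹ • P')
  have hh : (e • P - e⁻¹ • P')ᴴ = e • P - e⁻¹ • P' := by
    rw [conjTranspose_sub, conjTranspose_smul, conjTranspose_smul, hP, hP']
    simp
  rw [hh] at p
  have e1 : (e • P - e⁻¹ • P') * A * (e • P - e⁻¹ • P')
      = η • (P * A * P) + η⁻¹ • (P' * A * P') - P * A * P' - P' * A * P := by
    simp only [sub_mul, mul_sub, smul_mul_assoc, mul_smul_comm, smul_sub, smul_smul]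
    rw [hee, hei, mul_inv_cancel₀ he0.ne', inv_mul_cancel₀ he0.ne']
    module
  have e2 : A = P * A * P + P * A * P' + P' * A * P + P' * A * P' := by
    calc A = (P + P') * A * (P + P') := by rw [hs, one_mul, mul_one]
      _ = _ := by noncomm_ring
  rw [← sub_nonneg]
  have e3 : (1 + η) • (P * A * P) + (1 + η⁻¹) • (P' * A * P') - A
      = (e • P - e⁻¹ • P') * A * (e • P - e⁻¹ • P') := by
    rw [e1]
    have gen : ∀ a b c f : Matrix ι ι ℂ, (1 + η) • a + (1 + η⁻¹) • f - (a + b + c + f)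
      = η • a + η⁻¹ • f - b - c := by intros; module
    rw [← gen, ← e2]
  rw [e3]; exact p

lemma one_sub_sdiag {U : Matrix ι ι ℂ} (hU : IsUni U) (g : ι → ℝ) :
    1 - sdiag U g = sdiag U (fun j => 1 - g j) := by
  rw [← sdiag_one hU, sdiag_sub]

/-- spectral projection -/
def proj (U : Matrix ι ι ℂ) (p : ι → Prop) [DecidablePred p] : Matrix ι ι ℂ :=
  sdiag U (fun j => if p j then 1 else 0)

lemma proj_psd (U : Matrix ι ι ℂ) (p : ι → Prop) [DecidablePred p] : 0 ≤ proj U p :=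
  sdiag_psd _ fun j => by split_ifs <;> norm_num

lemma proj_compl {U : Matrix ι ι ℂ} (hU : IsUni U) (p : ι → Prop) [DecidablePred p] :
    1 - proj U p = proj U (fun j => ¬ p j) := by
  unfold proj
  rw [one_sub_sdiag hU]
  congr 1; funext j; by_cases h : p j <;> simp [h]

lemma proj_le_one {U : Matrix ι ι ℂ} (hU : IsUni U) (p : ι → Prop) [DecidablePred p] :
    proj U p ≤ 1 := by
  rw [← sub_nonneg, proj_compl hU]; exact proj_psd _ _

lemma proj_sq {U : Matrix ι ι ℂ} (hU : IsUni U) (p : ι → Prop) [DecidablePred p] :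
    proj U p * proj U p = proj U p := by
  unfold proj
  rw [sdiag_mul hU]
  congr 1; funext j; by_cases h : p j <;> simp [h]

lemma proj_herm (U : Matrix ι ι ℂ) (p : ι → Prop) [DecidablePred p] : (proj U p)ᴴ = proj U p :=
  sdiag_herm _ _

end general

variable {k : Type*} [Fintype k] [DecidableEq k] {d : Type*} [Fintype d] [DecidableEq d]
variable {X : Type*} [Fintype X] [DecidableEq X]

lemma density_card_pos {A : Matrix d d ℂ} (h : IsDensity A) : 0 < Fintype.card d := by
  rw [Fintype.card_pos_iff]
  by_contra hne
  rw [not_nonempty_iff] at hne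
  have := h.2
  simp [Matrix.trace] at this

lemma sum_specL_density {A : Matrix d d ℂ} (h : IsDensity A) : ∑ j, specL A j = 1 := by
  rw [sum_specL (psd_herm (density_psd h)), density_rtr h]

/-- the test for one i.i.d. channel -/
lemma single_test (P : X → ℝ) (hP : ∀ x, 0 ≤ P x) (hP1 : ∑ x, P x = 1)
    (τ : X → Matrix d d ℂ) (hτ : ∀ x, IsDensity (τ x)) {δ : ℝ} (hδ : 0 < δ) :
    ∃ T : (k → X) → Matrix (k → d) (k → d) ℂ,
      (∀ x, 0 ≤ T x) ∧ (∀ x, T x ≤ 1) ∧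
      (∑ x : k → X, (∏ i, P (x i)) • T x ≤
        Real.exp (-(Fintype.card k * (ent (∑ x, P x • τ x) - ∑ x, P x * ent (τ x) - 2 * δ))) •
          (1 : Matrix (k → d) (k → d) ℂ)) ∧
      (∑ x : k → X, (∏ i, P (x i)) * rtr ((1 - T x) * tensorFam (fun i => τ (x i))) ≤
        4 * Real.exp (-(Fintype.card k * (rate δ (16 * Fintype.card d) / 2)))) := by
  set n : ℝ := ((Fintype.card k : ℕ) : ℝ) with hn
  set σ := ∑ x, P x • τ x with hσ
  have hσd : IsDensity σ := density_sum _ (fun x _ => hP x) hP1 hτ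
  have hdpos : (0:ℝ) < 16 * Fintype.card d := by
    have := density_card_pos hσd
    positivity
  set K : ℝ := 16 * Fintype.card d with hK
  set h := ent σ with hh
  set hx := ∑ x, P x * ent (τ x) with hhx
  set r := rate δ K with hr
  have hr0 : 0 < r := rate_pos hδ hdpos
  let Uσ : Matrix (k → d) (k → d) ℂ := tensorFam (fun _ : k => specU σ)
  have hUσ : IsUni Uσ := tensorFam_uni fun _ => specU_uni σ
  let pσ : (k → d) → Prop := fun j => ∏ i, specL σ (j i) ≤ Real.exp (-(n * (h - δ)))
  let Ux : (k → X) → Matrix (k → d) (k → d) ℂ := fun x => tensorFam (fun i => specU (τ (x i)))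
  have hUx : ∀ x, IsUni (Ux x) := fun x => tensorFam_uni fun _ => specU_uni _
  let px : (k → X) → (k → d) → Prop := fun x j =>
    Real.exp (-(n * (hx + δ))) ≤ ∏ i, specL (τ (x i)) (j i)
  let Pj := proj Uσ pσ
  let Qx := fun x => proj (Ux x) (px x)
  have hPjh : Pjᴴ = Pj := proj_herm _ _
  have hPn : ∀ x : k → X, 0 ≤ ∏ i, P (x i) := fun x => Finset.prod_nonneg fun i _ => hP _
  have hPn1 : ∑ x : k → X, ∏ i, P (x i) = 1 := by
    have := (Finset.prod_univ_sum (fun _ : k => (Finset.univ : Finset X)) (fun _ x => P x)).symm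
    rw [Fintype.piFinset_univ] at this
    rw [this]; simp [hP1]
  have hτn : ∀ x : k → X, IsDensity (tensorFam fun i => τ (x i)) := fun x => density_tensor fun i => hτ _
  have hσn : tensorFam (fun _ : k => σ) = ∑ x : k → X, (∏ i, P (x i)) • tensorFam (fun i => τ (x i)) := by
    have := tensorFam_sum (fun _ : k => (Finset.univ : Finset X)) (fun _ x => P x) (fun _ x => τ x)
    rw [Fintype.piFinset_univ] at this
    exact this
  have hσherm := psd_herm (density_psd hσd)
  have hσspec : tensorFam (fun _ : k => σ) = sdiag Uσ (fun j => ∏ i, specL σ (j i)) :=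
    tensorFam_spec fun _ => hσherm
  have hτspec : ∀ x : k → X, tensorFam (fun i => τ (x i)) = sdiag (Ux x) (fun j => ∏ i, specL (τ (x i)) (j i)) :=
    fun x => tensorFam_spec fun i => psd_herm (density_psd (hτ (x i)))
  have hT0 : ∀ x, 0 ≤ Pj * Qx x * Pj := by
    intro x
    have := psd_conj (proj_psd (Ux x) (px x)) Pj
    rwa [hPjh] at this
  have hT1 : ∀ x, Pj * Qx x * Pj ≤ 1 := by
    intro x
    have := conj_mono (proj_le_one (hUx x) (px x)) Pj
    rw [hPjh, mul_one, proj_sq hUσ] at this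
    exact this.trans (proj_le_one hUσ _)
  -- classical error estimates
  have E2 : rtr ((1 - Pj) * tensorFam (fun _ : k => σ)) ≤ Real.exp (-(n * r)) := by
    have h1 : rtr ((1 - Pj) * tensorFam (fun _ : k => σ))
        = ∑ j : k → d, (if ¬ pσ j then 1 else 0) * ∏ i, specL σ (j i) := by
      rw [rtr_mul_comm, proj_compl hUσ]
      unfold proj
      rw [rtr_mul_sdiag, hσspec]
      simp only [diagw_sdiag hUσ]
    rw [h1]
    refine chernoff (fun _ : k => specL σ) (fun _ a => Real.log (specL σ a))
      (fun _ a => specL_nonneg (density_psd hσd) a) (fun _ => sum_specL_density hσd) hdpos hδ ?_ _ ?_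
    · intro i
      refine (Finset.sum_le_card_nsmul _ _ 16 fun a _ =>
        k16 (specL_nonneg (density_psd hσd) a) (specL_le_one hσd a)).trans ?_
      rw [hK, nsmul_eq_mul, Finset.card_univ]; linarith
    · intro j hj hz
      simp only [pσ, not_le] at hj
      have hlog := Real.log_lt_log (Real.exp_pos _) hj
      rw [Real.log_exp, Real.log_prod (fun i _ => hz i)] at hlog
      have hmean : ∑ a, specL σ a * Real.log (specL σ a) = - h := by
        rw [hh, ent, ← Finset.sum_neg_distrib]
        exact Finset.sum_congr rfl fun a _ => by rw [Real.negMulLog]; ring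
      rw [hmean, Finset.sum_const, Finset.card_univ, nsmul_eq_mul]
      rw [← hn]
      linarith
  have E1 : ∑ x : k → X, (∏ i, P (x i)) * rtr ((1 - Qx x) * tensorFam (fun i => τ (x i)))
      ≤ Real.exp (-(n * r)) := by
    have h1 : ∀ x : k → X, (∏ i, P (x i)) * rtr ((1 - Qx x) * tensorFam (fun i => τ (x i)))
        = ∑ j : k → d, (if ¬ px x j then 1 else 0) * ∏ i, (P (x i) * specL (τ (x i)) (j i)) := by
      intro x
      rw [rtr_mul_comm, proj_compl (hUx x)]
      unfold proj
      rw [rtr_mul_sdiag, hτspec]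
      simp only [diagw_sdiag (hUx x)]
      rw [Finset.mul_sum]
      refine Finset.sum_congr rfl fun j _ => ?_
      rw [Finset.prod_mul_distrib]; ring
    simp only [h1]
    have h2 := chernoff (k := k) (α := X × d) (fun _ a => P a.1 * specL (τ a.1) a.2)
      (fun _ a => - Real.log (specL (τ a.1) a.2))
      (fun _ a => mul_nonneg (hP _) (specL_nonneg (density_psd (hτ _)) _))
      (fun _ => by
        rw [Fintype.sum_prod_type]
        simp only [← Finset.mul_sum, sum_specL_density (hτ _), mul_one, hP1]) hdpos hδ
      (fun _ => by
        rw [Fintype.sum_prod_type]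
        calc _ ≤ ∑ x, P x * ∑ j : d, (16:ℝ) := by
              refine Finset.sum_le_sum fun x _ => ?_
              simp only [mul_assoc]
              rw [← Finset.mul_sum]
              refine mul_le_mul_of_nonneg_left (Finset.sum_le_sum fun j _ => ?_) (hP x)
              rw [neg_sq, abs_neg]
              exact k16 (specL_nonneg (density_psd (hτ x)) j) (specL_le_one (hτ x) j)
          _ = K := by
              rw [← Finset.sum_mul, hP1, one_mul, Finset.sum_const, Finset.card_univ, nsmul_eq_mul, hK]
              ring)
      (fun y => ¬ px (fun i => (y i).1) (fun i => (y i).2))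
      (fun y hy hz => by
        simp only [px, not_le] at hy
        have hz' : ∀ i, specL (τ (y i).1) (y i).2 ≠ 0 := fun i => right_ne_zero_of_mul (hz i)
        have hpos : 0 < ∏ i, specL (τ (y i).1) (y i).2 := Finset.prod_pos fun i _ =>
          lt_of_le_of_ne (specL_nonneg (density_psd (hτ _)) _) (hz' i).symm
        have hlog := Real.log_lt_log hpos hy
        rw [Real.log_exp, Real.log_prod (fun i _ => hz' i)] at hlog
        have hmean : ∑ a : X × d, P a.1 * specL (τ a.1) a.2 * -Real.log (specL (τ a.1) a.2) = hx := by
          rw [hhx, Fintype.sum_prod_type]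
          refine Finset.sum_congr rfl fun x _ => ?_
          rw [ent, Finset.mul_sum]
          exact Finset.sum_congr rfl fun a _ => by rw [Real.negMulLog]; ring
        rw [hmean, Finset.sum_const, Finset.card_univ, nsmul_eq_mul, Finset.sum_neg_distrib]
        rw [← hn]
        linarith)
    refine le_trans (le_of_eq ?_) h2
    rw [← Fintype.sum_prod_type']
    exact (Fintype.sum_equiv (Equiv.arrowProdEquivProdArrow k (fun _ => X) (fun _ => d)) _ _ fun y => rfl).symm
  refine ⟨fun x => Pj * Qx x * Pj, hT0, hT1, ?_, ?_⟩
  · set b := Real.exp (n * (hx + δ)) with hb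
    have hbb : b * Real.exp (-(n * (hx + δ))) = 1 := by rw [hb, ← Real.exp_add]; simp
    have s1 : ∀ x, Qx x ≤ b • tensorFam (fun i => τ (x i)) := by
      intro x
      rw [hτspec, ← sdiag_smul]
      refine sdiag_mono _ fun j => ?_
      have hnn : 0 ≤ ∏ i, specL (τ (x i)) (j i) :=
        Finset.prod_nonneg fun i _ => specL_nonneg (density_psd (hτ _)) _
      have hb0 : 0 < b := Real.exp_pos _
      split_ifs with hj
      · rw [← hbb]; exact mul_le_mul_of_nonneg_left hj hb0.le
      · positivity
    have s2 : ∑ x : k → X, (∏ i, P (x i)) • (Pj * Qx x * Pj) ≤ b • (Pj * tensorFam (fun _ : k => σ) * Pj) := by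
      calc _ ≤ ∑ x : k → X, (∏ i, P (x i)) • (Pj * (b • tensorFam (fun i => τ (x i))) * Pj) := by
            refine Finset.sum_le_sum fun x _ => smul_mono (hPn x) ?_
            have := conj_mono (s1 x) Pj
            rwa [hPjh] at this
        _ = _ := by
            rw [hσn, Finset.mul_sum, Finset.sum_mul, Finset.smul_sum]
            refine Finset.sum_congr rfl fun x _ => ?_
            simp only [mul_smul_comm, smul_mul_assoc]
            rw [smul_comm]
    refine s2.trans ?_
    have s3 : Pj * tensorFam (fun _ : k => σ) * Pj ≤ Real.exp (-(n * (h - δ))) • (1 : Matrix (k → d) (k → d) ℂ) := by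
      rw [hσspec]
      show proj Uσ pσ * _ * proj Uσ pσ ≤ _
      unfold proj
      rw [sdiag_mul hUσ, sdiag_mul hUσ, ← sdiag_one hUσ, ← sdiag_smul]
      refine sdiag_mono _ fun j => ?_
      by_cases hj : pσ j
      · simp only [hj, if_true, one_mul, mul_one]; exact hj
      · simp only [hj, if_false, zero_mul, mul_one]; positivity
    refine (smul_mono (Real.exp_pos _).le s3).trans (le_of_eq ?_)
    rw [smul_smul, ← Real.exp_add]
    congr 2; ring
  · set q := Real.exp (-(n * (r / 2))) with hq
    have hq0 : 0 < q := Real.exp_pos _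
    have hq1 : q ≤ 1 := by
      rw [hq, Real.exp_le_one_iff]
      have : 0 ≤ n := Nat.cast_nonneg _
      have : 0 ≤ n * (r / 2) := by positivity
      linarith
    have hqq : Real.exp (-(n * r)) = q * q := by
      rw [hq, ← Real.exp_add]; congr 1; ring
    have pt : ∀ x : k → X, rtr ((1 - Pj * Qx x * Pj) * tensorFam (fun i => τ (x i))) ≤
        rtr ((1 - Qx x) * tensorFam (fun i => τ (x i))) + q +
          (1 + q⁻¹) * rtr ((1 - Pj) * tensorFam (fun i => τ (x i))) := by
      intro x
      set τn := tensorFam (fun i => τ (x i)) with hτn'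
      have ht0 : 0 ≤ τn := density_psd (hτn x)
      have ht1 : rtr τn = 1 := density_rtr (hτn x)
      have h1h : (1 - Pj)ᴴ = 1 - Pj := by rw [conjTranspose_sub, conjTranspose_one, hPjh]
      have a1 := pinch (proj_psd (Ux x) (px x)) hPjh h1h (by abel) hq0
      have a2 := conj_mono (proj_le_one (hUx x) (px x)) (1 - Pj)
      rw [h1h, mul_one] at a2
      have a3 : (1 - Pj) * (1 - Pj) = 1 - Pj := by
        show (1 - proj Uσ pσ) * (1 - proj Uσ pσ) = 1 - proj Uσ pσ
        rw [proj_compl hUσ, proj_sq hUσ]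
      rw [a3] at a2
      have a4 := rtr_mul_mono a1 ht0
      have a5 := rtr_mul_mono a2 ht0
      rw [add_mul, rtr_add, smul_mul_assoc, smul_mul_assoc, rtr_smul, rtr_smul] at a4
      have a6 := rtr_mul_mono (hT1 x) ht0
      rw [one_mul, ht1] at a6
      have b1 : rtr ((1 - Pj * Qx x * Pj) * τn) = 1 - rtr (Pj * Qx x * Pj * τn) := by
        rw [sub_mul, one_mul, rtr_sub, ht1]
      have b2 : rtr ((1 - Qx x) * τn) = 1 - rtr (Qx x * τn) := by
        rw [sub_mul, one_mul, rtr_sub, ht1]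
      rw [b1, b2]
      have c1 : 0 < 1 + q⁻¹ := by positivity
      have c2 := mul_le_mul_of_nonneg_left a5 c1.le
      have c3 := mul_le_mul_of_nonneg_left a6 hq0.le
      change rtr (Qx x * τn) ≤ (1 + q) * rtr (Pj * Qx x * Pj * τn) + (1 + q⁻¹) * rtr ((1 - Pj) * Qx x * (1 - Pj) * τn) at a4
      change (1 + q⁻¹) * rtr ((1 - Pj) * Qx x * (1 - Pj) * τn) ≤ _ at c2
      change q * rtr (Pj * Qx x * Pj * τn) ≤ _ at c3
      linarith
    have sum2 : ∑ x : k → X, (∏ i, P (x i)) * rtr ((1 - Pj) * tensorFam (fun i => τ (x i)))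
        = rtr ((1 - Pj) * tensorFam (fun _ : k => σ)) := by
      rw [hσn, Finset.mul_sum, rtr_sum]
      refine Finset.sum_congr rfl fun x _ => ?_
      rw [mul_smul_comm, rtr_smul]
    calc _ ≤ ∑ x : k → X, (∏ i, P (x i)) * (rtr ((1 - Qx x) * tensorFam (fun i => τ (x i))) + q +
          (1 + q⁻¹) * rtr ((1 - Pj) * tensorFam (fun i => τ (x i)))) :=
          Finset.sum_le_sum fun x _ => mul_le_mul_of_nonneg_left (pt x) (hPn x)
      _ = ∑ x : k → X, (∏ i, P (x i)) * rtr ((1 - Qx x) * tensorFam (fun i => τ (x i)))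
          + q + (1 + q⁻¹) * rtr ((1 - Pj) * tensorFam (fun _ : k => σ)) := by
          simp only [mul_add, Finset.sum_add_distrib]
          rw [← Finset.sum_mul, hPn1, one_mul, ← sum2, Finset.mul_sum]
          congr 1
          exact Finset.sum_congr rfl fun x _ => by ring
      _ ≤ q * q + q + (1 + q⁻¹) * (q * q) := by
          rw [hqq] at E1 E2
          gcongr
      _ = q * q + q + q * q + q := by field_simp; ring
      _ ≤ 4 * q := by nlinarith
end PartG

section PartH
set_option linter.unusedSectionVars false
open scoped MatrixOrder
open Matrix

section margs
variable {μ Y : Type*} [Fintype μ] [DecidableEq μ] [Fintype Y] [DecidableEq Y]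

lemma marg_total (w : Y → ℝ) (hw : ∑ y, w y = 1) : ∑ F : μ → Y, ∏ m, w (F m) = 1 := by
  have := (Finset.prod_univ_sum (fun _ : μ => (Finset.univ : Finset Y)) (fun _ x => w x)).symm
  rw [Fintype.piFinset_univ] at this
  rw [this]; simp [hw]

lemma marg_one (w : Y → ℝ) (hw : ∑ y, w y = 1) (a : μ) (g : Y → ℝ) :
    ∑ F : μ → Y, (∏ m, w (F m)) * g (F a) = ∑ y, w y * g y := by
  have h1 : ∀ F : μ → Y, (∏ m, w (F m)) * g (F a) = ∏ m, (w (F m) * if m = a then g (F m) else 1) := by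
    intro F
    rw [Finset.prod_mul_distrib, Finset.prod_ite_eq' Finset.univ a]
    simp
  simp only [h1]
  have := (Finset.prod_univ_sum (fun _ : μ => (Finset.univ : Finset Y))
    (fun m x => w x * if m = a then g x else 1)).symm
  rw [Fintype.piFinset_univ] at this
  rw [this, Finset.prod_eq_single a]
  · simp
  · intro b _ hb; simp [hb, hw]
  · simp

lemma marg_two (w : Y → ℝ) (hw : ∑ y, w y = 1) {a b : μ} (hab : a ≠ b) (g : Y → Y → ℝ) :
    ∑ F : μ → Y, (∏ m, w (F m)) * g (F a) (F b) = ∑ y, ∑ z, w y * (w z * g y z) := by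
  have h1 : ∀ F : μ → Y, (∏ m, w (F m)) * g (F a) (F b) =
      ∑ y, (∏ m, w (F m) * if m = a then (if F m = y then 1 else 0) else
        if m = b then g y (F m) else 1) := by
    intro F
    have : ∀ y, (∏ m, w (F m) * if m = a then (if F m = y then 1 else 0) else
        if m = b then g y (F m) else 1) = (∏ m, w (F m)) * ((if F a = y then 1 else 0) * g y (F b)) := by
      intro y
      rw [Finset.prod_mul_distrib]
      congr 1
      rw [Finset.prod_eq_mul a b hab]
      · simp [hab.symm]
      · intro c _ hc; simp [hc.1, hc.2]
      · simp
      · simp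
    simp only [this]
    rw [← Finset.mul_sum]
    simp
  simp only [h1]
  rw [Finset.sum_comm]
  refine Finset.sum_congr rfl fun y _ => ?_
  have := (Finset.prod_univ_sum (fun _ : μ => (Finset.univ : Finset Y))
    (fun m x => w x * if m = a then (if x = y then 1 else 0) else
        if m = b then g y x else 1)).symm
  rw [Fintype.piFinset_univ] at this
  rw [this, Finset.prod_eq_mul a b hab]
  · simp [hab.symm, Finset.mul_sum]
  · intro c _ hc; simp [hc.1, hc.2, hw]
  · simp
  · simp
end margs

variable {k : Type*} [Fintype k] [DecidableEq k] {d : Type*} [Fintype d] [DecidableEq d]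
variable {X : Type*} [Fintype X] [DecidableEq X]

set_option maxHeartbeats 2000000 in
lemma codebook {Θ : Type*} [Fintype Θ] (P : X → ℝ) (hP : ∀ x, 0 ≤ P x) (hP1 : ∑ x, P x = 1)
    (τ : Θ → X → Matrix d d ℂ) (hτ : ∀ t x, IsDensity (τ t x)) {δ : ℝ} (hδ : 0 < δ) {I0 : ℝ}
    (hI : ∀ t, I0 ≤ ent (∑ x, P x • τ t x) - ∑ x, P x * ent (τ t x))
    {M : ℕ} (hM : 0 < M) {c : ℝ} (hc : 0 < c) :
    ∃ (F : Fin M → (k → X)) (D : Fin M → Matrix (k → d) (k → d) ℂ),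
      (∀ m, 0 ≤ D m) ∧ (∑ m, D m = 1) ∧
      ∀ t, (1 / (M : ℝ)) * ∑ m, rtr ((1 - D m) * tensorFam (fun i => τ t (F m i))) ≤
        Fintype.card Θ * (8 * Real.exp (-(Fintype.card k * (rate δ (16 * Fintype.card d) / 2))) + 6 * c
          + 4 * M * (Fintype.card Θ / c) * Real.exp (-(Fintype.card k * (I0 - 2 * δ)))) := by
  classical
  set q := Real.exp (-(Fintype.card k * (rate δ (16 * Fintype.card d) / 2))) with hq
  set e := Real.exp (-(Fintype.card k * (I0 - 2 * δ))) with he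
  have he0 : 0 < e := Real.exp_pos _
  set N : ℝ := ((Fintype.card Θ : ℕ) : ℝ) with hN
  have hMr : (0:ℝ) < M := by exact_mod_cast hM
  choose T hT0 hT1 hT2 hT3 using fun t => single_test (k := k) P hP hP1 (τ t) (hτ t) hδ
  choose W hW0 hW1 hW2 hW3 using fun x : k → X =>
    union_test (Finset.univ : Finset Θ) (fun t => T t x) (fun t => hT0 t x) (fun t => hT1 t x) hc
  choose D hD0 hD1 hD2 using fun F : Fin M → (k → X) =>
    hn hM (fun m => W (F m)) (fun m => hW0 _) (fun m => hW1 _) hc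
  set w : (k → X) → ℝ := fun x => ∏ i, P (x i) with hw
  have hw0 : ∀ x, 0 ≤ w x := fun x => Finset.prod_nonneg fun i _ => hP _
  have hw1 : ∑ x, w x = 1 := marg_total P hP1
  set R : Θ → (k → X) → Matrix (k → d) (k → d) ℂ := fun t x => tensorFam (fun i => τ t (x i)) with hR
  have hRd : ∀ t x, IsDensity (R t x) := fun t x => density_tensor fun i => hτ _ _
  have hR0 : ∀ t x, 0 ≤ R t x := fun t x => density_psd (hRd t x)
  have hR1 : ∀ t x, rtr (R t x) = 1 := fun t x => density_rtr (hRd t x)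
  -- averaged success
  have A1 : ∀ t, ∑ x, w x * rtr ((1 - W x) * R t x) ≤ 4 * q + c := by
    intro t
    calc _ ≤ ∑ x, (w x * rtr ((1 - T t x) * R t x) + w x * c) := by
          refine Finset.sum_le_sum fun x _ => ?_
          rw [← mul_add]
          refine mul_le_mul_of_nonneg_left ?_ (hw0 x)
          have := rtr_mul_mono (hW3 x t (Finset.mem_univ t)) (hR0 t x)
          rw [add_mul, rtr_add, smul_mul_assoc, one_mul, rtr_smul, hR1, mul_one] at this
          exact this
      _ ≤ _ := by
          rw [Finset.sum_add_distrib, ← Finset.sum_mul, hw1, one_mul]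
          exact add_le_add_left (hT3 t) c
  have A2 : ∑ x, w x • W x ≤ (N / c * e) • (1 : Matrix (k → d) (k → d) ℂ) := by
    have s1 : ∀ t, ∑ x, w x • T t x ≤ e • (1 : Matrix (k → d) (k → d) ℂ) := by
      intro t
      refine (hT2 t).trans (smul_mono_left ?_ one_psd)
      rw [he, Real.exp_le_exp]
      have := hI t
      have hk : (0:ℝ) ≤ Fintype.card k := Nat.cast_nonneg _
      have := mul_le_mul_of_nonneg_left (sub_le_sub_right this (2 * δ)) hk
      linarith
    have s2 : c • ∑ x, w x • W x ≤ (N * e) • (1 : Matrix (k → d) (k → d) ℂ) := by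
      calc c • ∑ x, w x • W x = ∑ x, w x • (c • W x) := by
            rw [Finset.smul_sum]; exact Finset.sum_congr rfl fun x _ => smul_comm _ _ _
        _ ≤ ∑ x, w x • ∑ t, T t x := Finset.sum_le_sum fun x _ => smul_mono (hw0 x) (hW2 x)
        _ = ∑ t, ∑ x, w x • T t x := by
            rw [Finset.sum_comm]; exact Finset.sum_congr rfl fun x _ => Finset.smul_sum
        _ ≤ ∑ t : Θ, e • (1 : Matrix (k → d) (k → d) ℂ) := Finset.sum_le_sum fun t _ => s1 t
        _ = _ := by
            rw [Finset.sum_const, Finset.card_univ, hN, mul_smul]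
            exact (Nat.cast_smul_eq_nsmul ℝ _ _).symm
    have s3 := smul_mono (inv_nonneg.2 hc.le) s2
    rw [smul_smul, inv_mul_cancel₀ hc.ne', one_smul, smul_smul] at s3
    refine s3.trans (le_of_eq ?_)
    congr 1; field_simp
  have A3 : ∀ t, ∑ x, ∑ y, w x * (w y * rtr (W y * R t x)) ≤ N / c * e := by
    intro t
    calc _ = ∑ x, w x * rtr ((∑ y, w y • W y) * R t x) := by
          refine Finset.sum_congr rfl fun x _ => ?_
          rw [Finset.sum_mul, rtr_sum, Finset.mul_sum]
          refine Finset.sum_congr rfl fun y _ => ?_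
          rw [smul_mul_assoc, rtr_smul]
      _ ≤ ∑ x, w x * (N / c * e) := by
          refine Finset.sum_le_sum fun x _ => mul_le_mul_of_nonneg_left ?_ (hw0 x)
          have := rtr_mul_mono A2 (hR0 t x)
          rwa [smul_mul_assoc, one_mul, rtr_smul, hR1, mul_one] at this
      _ = _ := by rw [← Finset.sum_mul, hw1, one_mul]
  set B := 8 * q + 6 * c + 4 * M * (N / c) * e with hB
  set err : Θ → (Fin M → k → X) → ℝ := fun t F =>
    (1 / (M : ℝ)) * ∑ m, rtr ((1 - D F m) * R t (F m)) with herr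
  have hDle : ∀ F m, D F m ≤ 1 := by
    intro F m
    rw [← hD1 F]
    exact Finset.single_le_sum (fun i _ => hD0 F i) (Finset.mem_univ m)
  have herr0 : ∀ t F, 0 ≤ err t F := by
    intro t F
    refine mul_nonneg (by positivity) (Finset.sum_nonneg fun m _ => ?_)
    exact rtr_mul_nonneg (sub_nonneg.2 (hDle F m)) (hR0 _ _)
  have hwF0 : ∀ F : Fin M → k → X, 0 ≤ ∏ m, w (F m) := fun F => Finset.prod_nonneg fun m _ => hw0 _
  have A4 : ∀ t, ∑ F, (∏ m, w (F m)) * err t F ≤ B := by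
    intro t
    have key : ∀ m, ∑ F, (∏ m, w (F m)) * rtr ((1 - D F m) * R t (F m)) ≤ B := by
      intro m
      have pt : ∀ F, rtr ((1 - D F m) * R t (F m)) ≤ 2 * rtr ((1 - W (F m)) * R t (F m)) +
          (∑ m' ∈ Finset.univ.erase m, 4 * rtr (W (F m') * R t (F m))) + 4 * c := by
        intro F
        have := rtr_mul_mono (hD2 F m) (hR0 t (F m))
        rw [add_mul, rtr_add, smul_mul_assoc, smul_mul_assoc, rtr_smul, rtr_smul, add_mul, rtr_add,
          Finset.sum_mul, rtr_sum, smul_mul_assoc, one_mul, rtr_smul, hR1, mul_one] at this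
        rw [← Finset.mul_sum]
        linarith
      calc _ ≤ ∑ F : Fin M → k → X, (∏ m, w (F m)) * (2 * rtr ((1 - W (F m)) * R t (F m)) +
          (∑ m' ∈ Finset.univ.erase m, 4 * rtr (W (F m') * R t (F m))) + 4 * c) :=
            Finset.sum_le_sum fun F _ => mul_le_mul_of_nonneg_left (pt F) (hwF0 F)
        _ = ∑ F : Fin M → k → X, (∏ m, w (F m)) * (2 * rtr ((1 - W (F m)) * R t (F m)))
            + ∑ m' ∈ Finset.univ.erase m, ∑ F : Fin M → k → X, (∏ m, w (F m)) * (4 * rtr (W (F m') * R t (F m)))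
            + 4 * c := by
            simp only [mul_add, Finset.sum_add_distrib]
            rw [← Finset.sum_mul, marg_total w hw1, one_mul]
            simp only [Finset.mul_sum]
            rw [Finset.sum_comm (s := Finset.univ.erase m)]
        _ ≤ 2 * (4 * q + c) + ∑ m' ∈ Finset.univ.erase m, 4 * (N / c * e) + 4 * c := by
            gcongr with m' hm'
            · rw [marg_one w hw1 m (fun x => 2 * rtr ((1 - W x) * R t x))]
              have := A1 t
              calc _ = 2 * ∑ x, w x * rtr ((1 - W x) * R t x) := by
                    rw [Finset.mul_sum]; exact Finset.sum_congr rfl fun x _ => by ring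
                _ ≤ _ := by linarith
            · rw [marg_two w hw1 (Finset.ne_of_mem_erase hm').symm (fun x y => 4 * rtr (W y * R t x))]
              have := A3 t
              calc _ = 4 * ∑ x, ∑ y, w x * (w y * rtr (W y * R t x)) := by
                    simp only [Finset.mul_sum]
                    exact Finset.sum_congr rfl fun x _ => Finset.sum_congr rfl fun y _ => by ring
                _ ≤ _ := by linarith
        _ ≤ 2 * (4 * q + c) + M * (4 * (N / c * e)) + 4 * c := by
            rw [Finset.sum_const, nsmul_eq_mul]
            have hcard : ((Finset.univ.erase m).card : ℝ) ≤ M := by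
              have := Finset.card_erase_le (s := (Finset.univ : Finset (Fin M))) (a := m)
              rw [Finset.card_univ, Fintype.card_fin] at this
              exact_mod_cast this
            have hN0 : 0 ≤ N := Nat.cast_nonneg _
            gcongr
        _ = B := by rw [hB]; ring
    calc _ = (1 / (M : ℝ)) * ∑ m, ∑ F, (∏ m, w (F m)) * rtr ((1 - D F m) * R t (F m)) := by
          rw [Finset.sum_comm, Finset.mul_sum]
          refine Finset.sum_congr rfl fun F _ => ?_
          rw [herr, ← Finset.mul_sum]; ring
      _ ≤ (1 / (M : ℝ)) * ∑ m : Fin M, B := by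
          gcongr with m; exact key m
      _ = B := by
          rw [Finset.sum_const, Finset.card_univ, Fintype.card_fin, nsmul_eq_mul]
          field_simp
  have A5 : ∑ F, (∏ m, w (F m)) * ∑ t, err t F ≤ N * B := by
    calc _ = ∑ t, ∑ F, (∏ m, w (F m)) * err t F := by
          rw [Finset.sum_comm]; exact Finset.sum_congr rfl fun F _ => Finset.mul_sum _ _ _
      _ ≤ ∑ t : Θ, B := Finset.sum_le_sum fun t _ => A4 t
      _ = N * B := by rw [Finset.sum_const, Finset.card_univ, nsmul_eq_mul]
  obtain ⟨F, hF⟩ : ∃ F : Fin M → k → X, ∑ t, err t F ≤ N * B := by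
    by_contra hcon
    push Not at hcon
    have hlt : ∑ F : Fin M → k → X, (∏ m, w (F m)) * (N * B) < ∑ F, (∏ m, w (F m)) * ∑ t, err t F := by
      refine Finset.sum_lt_sum (fun F _ => mul_le_mul_of_nonneg_left (hcon F).le (hwF0 F)) ?_
      by_contra h2
      push Not at h2
      have hz : ∀ F : Fin M → k → X, ∏ m, w (F m) = 0 := by
        intro F
        by_contra hne
        have := h2 F (Finset.mem_univ F)
        have := le_of_mul_le_mul_left this (lt_of_le_of_ne (hwF0 F) (Ne.symm hne))
        linarith [hcon F]
      have := marg_total (μ := Fin M) w hw1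
      simp [hz] at this
    rw [← Finset.sum_mul, marg_total w hw1, one_mul] at hlt
    linarith
  refine ⟨F, D F, hD0 F, hD1 F, fun t => ?_⟩
  exact (Finset.single_le_sum (f := fun t => err t F) (fun t _ => herr0 t F) (Finset.mem_univ t)).trans hF

end PartH

section PartI
set_option linter.unusedSectionVars false
open scoped MatrixOrder
open Matrix

lemma err_expr {Γ ι : Type*} [Fintype Γ] [Fintype ι] [DecidableEq ι] {M : ℕ} (hM : 0 < M)
    (G : Γ → ℝ) (hG : ∑ γ, G γ = 1) (D R : Γ → Fin M → Matrix ι ι ℂ)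
    (hR : ∀ γ m, rtr (R γ m) = 1) :
    1 - (1 / (M : ℝ)) * ∑ m, ∑ γ, G γ * rtr (D γ m * R γ m) =
      ∑ γ, G γ * ((1 / (M : ℝ)) * ∑ m, rtr ((1 - D γ m) * R γ m)) := by
  have hMr : (M : ℝ) ≠ 0 := by exact_mod_cast hM.ne'
  have h1 : ∀ γ, (1 / (M : ℝ)) * ∑ m, rtr ((1 - D γ m) * R γ m)
      = 1 - (1 / (M : ℝ)) * ∑ m, rtr (D γ m * R γ m) := by
    intro γ
    simp only [sub_mul, one_mul, rtr_sub, hR, Finset.sum_sub_distrib, Finset.sum_const,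
      Finset.card_univ, Fintype.card_fin, nsmul_eq_mul, mul_one, mul_sub]
    rw [one_div, inv_mul_cancel₀ hMr]
  simp only [h1, mul_sub, mul_one, Finset.sum_sub_distrib, hG]
  congr 1
  rw [Finset.sum_comm, Finset.mul_sum]
  refine Finset.sum_congr rfl fun γ _ => ?_
  rw [← Finset.mul_sum]; ring

lemma mkFP {𝒳 𝒮 S : Type*} [Fintype S] {d : ℕ} (ρ : 𝒳 → 𝒮 → Matrix (Fin d) (Fin d) ℂ)
    (v : S → 𝒮) (q : S → ℝ) (hq : ∀ a, 0 ≤ q a) (hq1 : ∑ a, q a = 1) :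
    ∃ Q : FinProb 𝒮, ∀ x : 𝒳,
      rhoQ ρ Q.1 x = ∑ a, q a • ρ x (v a) := by
  classical
  refine ⟨⟨∑ a, Finsupp.single (v a) (q a), ?_, ?_⟩, ?_⟩
  · intro s
    rw [Finsupp.finsetSum_apply]
    refine Finset.sum_nonneg fun a _ => ?_
    rw [Finsupp.single_apply]
    split_ifs
    · exact hq a
    · exact le_rfl
  · rw [← Finsupp.sum_finsetSum_index (fun _ => rfl) (fun _ _ _ => rfl)]
    simp [hq1]
  · intro x
    show Finsupp.sum (∑ a, Finsupp.single (v a) (q a)) (fun s w => w • ρ x s) = _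
    rw [← Finsupp.sum_finsetSum_index (fun s => by simp) (fun s a b => by rw [add_smul])]
    refine Finset.sum_congr rfl fun a _ => ?_
    rw [Finsupp.sum_single_index (by simp)]

variable {k : Type*} [Fintype k] [DecidableEq k] {d : Type*} [Fintype d] [DecidableEq d]

def permE (d : Type*) (π : Equiv.Perm k) : (k → d) ≃ (k → d) := Equiv.arrowCongr π (Equiv.refl d)

lemma tensorFam_perm (A : k → Matrix d d ℂ) (π : Equiv.Perm k) :
    tensorFam (fun i => A (π i)) = (tensorFam A).submatrix (permE d π) (permE d π) := by
  ext j j'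
  simp only [tensorFam, Matrix.of_apply, Matrix.submatrix_apply, permE, Equiv.arrowCongr_apply,
    Equiv.coe_refl, Function.comp]
  exact Fintype.prod_equiv π _ _ (fun i => by simp)

lemma rtr_perm (B : Matrix (k → d) (k → d) ℂ) (A : k → Matrix d d ℂ) (π : Equiv.Perm k) :
    rtr (B.submatrix (permE d π).symm (permE d π).symm * tensorFam A)
      = rtr (B * tensorFam (fun i => A (π i))) := by
  rw [tensorFam_perm]
  have : B.submatrix (permE d π).symm (permE d π).symm * tensorFam A =
    (B * (tensorFam A).submatrix (permE d π) (permE d π)).submatrix (permE d π).symm (permE d π).symm := by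
    rw [← Matrix.submatrix_mul_equiv _ _ _ (permE d π).symm]
    simp
  rw [this]
  unfold rtr
  congr 1
  exact Equiv.sum_comp (permE d π).symm
    (fun j => (B * (tensorFam A).submatrix (permE d π) (permE d π)) j j)

lemma direct_n {𝒳 𝒮 : Type*} [Fintype 𝒳] [DecidableEq 𝒳] {d : ℕ}
    (ρ : 𝒳 → 𝒮 → Matrix (Fin d) (Fin d) ℂ) (hρ : ∀ x s, IsDensity (ρ x s))
    (P : ProbDist 𝒳) {I0 : ℝ} (hI : ∀ Q : FinProb 𝒮, I0 ≤ mutInfI ρ P.1 Q.1 * Real.log 2)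
    {ε : ℝ} (hε : 0 < ε) (S0 : Finset 𝒮)
    (hS0 : ∀ s : 𝒮, ∃ s' ∈ S0, ∀ x : 𝒳, Loewner (ρ x s) ((1 + ε) • ρ x s'))
    {δ : ℝ} (hδ : 0 < δ) {n : ℕ} (hn : 0 < n) {M : ℕ} (hM : 0 < M) {c : ℝ} (hc : 0 < c) :
    ∃ (K : ℕ) (G : Fin K → ℝ) (f : Fin K → Fin M → (Fin n → 𝒳))
          (D : Fin K → Fin M → Matrix (Fin n → Fin d) (Fin n → Fin d) ℂ),
          (∀ γ, 0 ≤ G γ) ∧ (∑ γ, G γ = 1) ∧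
          (∀ γ m, (D γ m).PosSemidef) ∧ (∀ γ, ∑ m, D γ m = 1) ∧
      ∀ sv : Fin n → 𝒮, 1 - (1 / (M : ℝ)) * ∑ m, ∑ γ, G γ *
              (Matrix.trace (D γ m * tensorFam fun k' => ρ (f γ m k') (sv k'))).re ≤
        (1 + ε) ^ n * (((n:ℝ) + 1) ^ S0.card * (((n:ℝ) + 1) ^ S0.card *
          (8 * Real.exp (-(n * (rate δ (16 * d) / 2))) + 6 * c
          + 4 * M * (((n:ℝ) + 1) ^ S0.card / c) * Real.exp (-(n * (I0 - 2 * δ)))))) := by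
  classical
  have : Nonempty (Fin n) := ⟨⟨0, hn⟩⟩
  let S := {s // s ∈ S0}
  have hScard : Fintype.card S = S0.card := Fintype.card_coe S0
  let Θ := {f : S → Fin (n + 1) // ∑ a, ((f a : ℕ)) = n}
  have hΘ : (Fintype.card Θ : ℝ) ≤ ((n:ℝ) + 1) ^ S0.card := by
    have : Fintype.card Θ ≤ (n + 1) ^ S0.card := by
      refine (Fintype.card_subtype_le _).trans ?_
      rw [Fintype.card_fun, Fintype.card_fin, hScard]
    exact_mod_cast this
  have hnr : (n : ℝ) ≠ 0 := by exact_mod_cast hn.ne'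
  let q : Θ → S → ℝ := fun t a => ((t.1 a : ℕ) : ℝ) / n
  have hq0 : ∀ t a, 0 ≤ q t a := fun t a => by positivity
  have hq1 : ∀ t, ∑ a, q t a = 1 := by
    intro t
    simp only [q]
    rw [← Finset.sum_div, ← Nat.cast_sum, t.2, div_self hnr]
  let τ : Θ → 𝒳 → Matrix (Fin d) (Fin d) ℂ := fun t x => ∑ a, q t a • ρ x a.1
  have hτ : ∀ t x, IsDensity (τ t x) := fun t x =>
    density_sum (A := fun a : S => ρ x a.1) Finset.univ (fun a _ => hq0 t a) (hq1 t) (fun a => hρ x a.1)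
  have hIt : ∀ t, I0 ≤ ent (∑ x, P.1 x • τ t x) - ∑ x, P.1 x * ent (τ t x) := by
    intro t
    obtain ⟨Q, hQ⟩ := mkFP ρ (fun a : S => a.1) (q t) (hq0 t) (hq1 t)
    have := hI Q
    rw [mutInf_eq hρ P Q] at this
    simp only [hQ] at this
    exact this
  obtain ⟨F, D, hD0, hD1, hDE⟩ := codebook (k := Fin n) P.1 P.2.1 P.2.2 τ hτ hδ hIt hM hc
  set E := (8 * Real.exp (-(n * (rate δ (16 * d) / 2))) + 6 * c
          + 4 * M * (((n:ℝ) + 1) ^ S0.card / c) * Real.exp (-(n * (I0 - 2 * δ)))) with hE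
  have hE0 : 0 ≤ E := by positivity
  have hDE' : ∀ t, (1 / (M : ℝ)) * ∑ m, rtr ((1 - D m) * tensorFam (fun i => τ t (F m i))) ≤
      ((n:ℝ) + 1) ^ S0.card * E := by
    intro t
    refine (hDE t).trans ?_
    rw [Fintype.card_fin, Fintype.card_fin, hE]
    gcongr
  have hD01 : ∀ m, 0 ≤ 1 - D m := by
    intro m
    rw [sub_nonneg, ← hD1]
    exact Finset.single_le_sum (fun i _ => hD0 i) (Finset.mem_univ m)
  -- error for finite sequences
  let g : (Fin n → 𝒮) → ℝ := fun s =>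
    (1 / (M : ℝ)) * ∑ m, rtr ((1 - D m) * tensorFam (fun i => ρ (F m i) (s i)))
  have hR : ∀ (x : Fin n → 𝒳) (s : Fin n → 𝒮), IsDensity (tensorFam (fun i => ρ (x i) (s i))) :=
    fun x s => density_tensor fun i => hρ _ _
  have hg0 : ∀ s, 0 ≤ g s := fun s => mul_nonneg (by positivity)
    (Finset.sum_nonneg fun m _ => rtr_mul_nonneg (hD01 m) (density_psd (hR _ _)))
  have hgavg : ∀ s0 : Fin n → S, (∑ π : Equiv.Perm (Fin n), g (fun i => (s0 (π i)).1)) / (n.factorial : ℝ)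
      ≤ ((n:ℝ) + 1) ^ S0.card * (((n:ℝ) + 1) ^ S0.card * E) := by
    intro s0
    have h1 := types_avg s0 (fun s => g (fun i => (s i).1)) (fun s => hg0 _)
    rw [hScard, Fintype.card_fin] at h1
    refine h1.trans ?_
    refine mul_le_mul_of_nonneg_left ?_ (by positivity)
    have hcn : ∀ a, cnt s0 a < n + 1 := by
      intro a
      have := Fintype.card_subtype_le (fun i => s0 i = a)
      rw [Fintype.card_fin] at this
      exact Nat.lt_succ_of_le this
    let t : Θ := ⟨fun a => ⟨cnt s0 a, hcn a⟩, by
      have := sum_cnt s0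
      rw [Fintype.card_fin] at this
      exact this⟩
    have hqt : ∀ a, q t a = emp s0 a := by
      intro a
      simp only [q, emp, Fintype.card_fin]
      rfl
    refine le_trans (le_of_eq ?_) (hDE' t)
    simp only [g]
    have hts : ∀ m, tensorFam (fun i => τ t (F m i)) =
        ∑ s : Fin n → S, (∏ i, emp s0 (s i)) • tensorFam (fun i => ρ (F m i) (s i).1) := by
      intro m
      have := tensorFam_sum (fun _ : Fin n => (Finset.univ : Finset S)) (fun _ a => q t a)
        (fun i a => ρ (F m i) a.1)
      rw [Fintype.piFinset_univ] at this
      simp only [hqt] at this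
      simp only [τ, hqt]
      exact this
    simp only [hts, Finset.mul_sum, rtr_sum, mul_smul_comm, rtr_smul]
    rw [Finset.sum_comm]
    refine Finset.sum_congr rfl fun m _ => Finset.sum_congr rfl fun s _ => by ring
  let e := (Fintype.equivFin (Equiv.Perm (Fin n))).symm
  have hcardp : Fintype.card (Equiv.Perm (Fin n)) = n.factorial := by
    rw [Fintype.card_perm, Fintype.card_fin]
  have hfpos : (0:ℝ) < n.factorial := by exact_mod_cast Nat.factorial_pos n
  have hGsum : ∑ γ : Fin (Fintype.card (Equiv.Perm (Fin n))), (1 / (n.factorial : ℝ)) = 1 := by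
    rw [Finset.sum_const, Finset.card_univ, Fintype.card_fin, hcardp, nsmul_eq_mul]
    field_simp
  refine ⟨Fintype.card (Equiv.Perm (Fin n)), fun _ => 1 / (n.factorial : ℝ),
    fun γ m i => F m ((e γ)⁻¹ i),
    fun γ m => (D m).submatrix (permE (Fin d) (e γ)).symm (permE (Fin d) (e γ)).symm, ?_, hGsum, ?_, ?_, ?_⟩
  · intro γ; positivity
  · intro γ m
    exact (Matrix.nonneg_iff_posSemidef.1 (hD0 m)).submatrix _
  · intro γ
    have : ∑ m, (D m).submatrix (permE (Fin d) (e γ)).symm (permE (Fin d) (e γ)).symm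
      = (∑ m, D m).submatrix (permE (Fin d) (e γ)).symm (permE (Fin d) (e γ)).symm := by
      ext i j; simp [Matrix.sum_apply]
    rw [this, hD1]
    exact Matrix.submatrix_one_equiv _
  · intro sv
    choose sb hsb hsbl using hS0
    let s0 : Fin n → S := fun i => ⟨sb (sv i), hsb _⟩
    have h1 := err_expr hM (fun _ : Fin (Fintype.card (Equiv.Perm (Fin n))) => 1 / (n.factorial : ℝ)) hGsum
      (fun γ m => (D m).submatrix (permE (Fin d) (e γ)).symm (permE (Fin d) (e γ)).symm)
      (fun γ m => tensorFam (fun i => ρ (F m ((e γ)⁻¹ i)) (sv i)))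
      (fun γ m => density_rtr (hR _ _))
    unfold rtr at h1
    rw [h1]
    have h2 : ∀ γ, (1 / (M:ℝ)) * ∑ m, ((1 - (D m).submatrix (permE (Fin d) (e γ)).symm (permE (Fin d) (e γ)).symm) *
        tensorFam (fun i => ρ (F m ((e γ)⁻¹ i)) (sv i))).trace.re ≤ (1 + ε) ^ n * g (fun i => (s0 ((e γ) i)).1) := by
      intro γ
      simp only [g]
      rw [mul_left_comm]
      refine mul_le_mul_of_nonneg_left ?_ (one_div_nonneg.2 (Nat.cast_nonneg M))
      rw [Finset.mul_sum]
      refine Finset.sum_le_sum fun m _ => ?_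
      have e1 : 1 - (D m).submatrix (permE (Fin d) (e γ)).symm (permE (Fin d) (e γ)).symm
          = (1 - D m).submatrix (permE (Fin d) (e γ)).symm (permE (Fin d) (e γ)).symm := by
        ext i j
        simp [Matrix.one_apply]
      have e2 := rtr_perm (1 - D m) (fun i => ρ (F m ((e γ)⁻¹ i)) (sv i)) (e γ)
      rw [← e1] at e2
      change rtr _ ≤ _
      rw [e2]
      have e3 : ∀ i, (e γ)⁻¹ ((e γ) i) = i := fun i => (e γ).symm_apply_apply i
      simp only [e3]
      rw [← rtr_smul, ← mul_smul_comm]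
      refine rtr_mul_mono' ?_ (hD01 m)
      have h3 := tensorFam_smul (1 + ε) (fun i => ρ (F m i) (s0 ((e γ) i)).1)
      rw [Fintype.card_fin] at h3
      rw [← h3]
      exact tensorFam_mono (fun i => density_psd (hρ _ _)) fun i => hsbl (sv (e γ i)) (F m i)
    calc _ ≤ ∑ γ, 1 / (n.factorial : ℝ) * ((1 + ε) ^ n * g (fun i => (s0 ((e γ) i)).1)) :=
          Finset.sum_le_sum fun γ _ => mul_le_mul_of_nonneg_left (h2 γ) (by positivity)
      _ = (1 + ε) ^ n * ((∑ π : Equiv.Perm (Fin n), g (fun i => (s0 (π i)).1)) / (n.factorial : ℝ)) := by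
          rw [Equiv.sum_comp e (fun π => 1 / (n.factorial : ℝ) * ((1 + ε) ^ n * g (fun i => (s0 (π i)).1))),
            ← Finset.mul_sum, ← Finset.mul_sum]
          ring
      _ ≤ _ := mul_le_mul_of_nonneg_left (hgavg s0) (by positivity)
end PartI

section PartJ
set_option linter.unusedSectionVars false
open scoped MatrixOrder
open Matrix

lemma poly_exp_lim (m : ℕ) {r : ℝ} (hr : 0 < r) :
    Tendsto (fun n : ℕ => 22 * ((n:ℝ) + 1) ^ m * Real.exp (-(n * r))) atTop (nhds 0) := by
  have h1 : |Real.exp (-r)| < 1 := by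
    rw [abs_of_pos (Real.exp_pos _)]
    exact Real.exp_lt_one_iff.2 (by linarith)
  have h2 := (tendsto_pow_const_mul_const_pow_of_abs_lt_one m h1).comp (tendsto_add_atTop_nat 1)
  have h3 := h2.const_mul (22 * Real.exp r)
  rw [mul_zero] at h3
  refine h3.congr fun n => ?_
  simp only [Function.comp]
  rw [← Real.exp_nat_mul]
  push_cast
  have : Real.exp (-(n * r)) = Real.exp r * Real.exp (((n:ℝ) + 1) * -r) := by
    rw [← Real.exp_add]; congr 1; ring
  rw [this]; ring

lemma bound_n {n m M : ℕ} {r r1 g I0 R2 ε : ℝ} (h1 : r1 ≤ r) (h2 : r1 ≤ g / 4) (hg : I0 - R2 = g)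
    (hε : ε = r1 / 2) (hr1 : 0 < r1) (hM : (M:ℝ) ≤ 2 * Real.exp (n * R2)) :
    (1 + ε) ^ n * (((n:ℝ) + 1) ^ m * (((n:ℝ) + 1) ^ m *
          (8 * Real.exp (-(n * r)) + 6 * Real.exp (-(n * r1))
          + 4 * M * (((n:ℝ) + 1) ^ m / Real.exp (-(n * r1))) * Real.exp (-(n * (I0 - 2 * (g / 8)))))))
      ≤ 22 * ((n:ℝ) + 1) ^ (3 * m) * Real.exp (-(n * (r1 / 2))) := by
  have hn0 : (0:ℝ) ≤ n := Nat.cast_nonneg n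
  have hp : (1:ℝ) ≤ ((n:ℝ) + 1) ^ m := one_le_pow₀ (by linarith)
  set p := ((n:ℝ) + 1) ^ m with hpdef
  have hp3 : ((n:ℝ) + 1) ^ (3 * m) = p ^ 3 := by rw [hpdef, ← pow_mul, mul_comm]
  have e1 : Real.exp (-(n * r)) ≤ Real.exp (-(n * r1)) := by
    apply Real.exp_le_exp.2; nlinarith
  have e2 : (1 + ε) ^ n ≤ Real.exp (n * (r1 / 2)) := by
    rw [Real.exp_nat_mul]
    refine pow_le_pow_left₀ (by linarith) ?_ n
    have := Real.add_one_le_exp (r1 / 2)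
    linarith
  have e3 : 4 * M * (p / Real.exp (-(n * r1))) * Real.exp (-(n * (I0 - 2 * (g / 8))))
      ≤ 8 * p * Real.exp (-(n * r1)) := by
    calc _ ≤ 4 * (2 * Real.exp (n * R2)) * (p / Real.exp (-(n * r1))) * Real.exp (-(n * (I0 - 2 * (g / 8)))) := by
          gcongr
      _ = 8 * p * (Real.exp (n * R2) * Real.exp (n * r1) * Real.exp (-(n * (I0 - 2 * (g / 8))))) := by
          rw [Real.exp_neg (n * r1)]; field_simp; ring
      _ ≤ _ := by
          rw [← Real.exp_add, ← Real.exp_add]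
          gcongr
          have : (n:ℝ) * (R2 + r1 - (I0 - 2 * (g / 8))) ≤ n * (-r1) :=
            mul_le_mul_of_nonneg_left (by linarith) hn0
          linarith
  have e4 : 8 * Real.exp (-(n * r)) + 6 * Real.exp (-(n * r1))
      + 4 * M * (p / Real.exp (-(n * r1))) * Real.exp (-(n * (I0 - 2 * (g / 8)))) ≤
      22 * p * Real.exp (-(n * r1)) := by
    have := Real.exp_pos (-(n * r1))
    nlinarith [mul_le_mul_of_nonneg_right hp this.le]
  calc _ ≤ Real.exp (n * (r1 / 2)) * (p * (p * (22 * p * Real.exp (-(n * r1))))) := by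
        gcongr
    _ = 22 * p ^ 3 * (Real.exp (n * (r1 / 2)) * Real.exp (-(n * r1))) := by ring
    _ = _ := by
        rw [← Real.exp_add, hp3]; congr 2; ring

lemma direct {𝒳 𝒮 : Type*} [Fintype 𝒳] [DecidableEq 𝒳] [Nonempty 𝒮] {d : ℕ} (hd : 0 < d)
    (ρ : 𝒳 → 𝒮 → Matrix (Fin d) (Fin d) ℂ) (hρ : ∀ x s, IsDensity (ρ x s)) (hAss : AssumptionA ρ)
    (P : ProbDist 𝒳) {I0 : ℝ} (hI : ∀ Q : FinProb 𝒮, I0 ≤ mutInfI ρ P.1 Q.1 * Real.log 2)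
    {R : ℝ} (hR0 : 0 ≤ R) (hR : R * Real.log 2 < I0) :
    ∀ β > (0 : ℝ), ∀ δ > (0 : ℝ), ∃ N : ℕ, ∀ n ≥ N,
        ∃ (M k : ℕ) (G : Fin k → ℝ) (f : Fin k → Fin M → (Fin n → 𝒳))
          (D : Fin k → Fin M → Matrix (Fin n → Fin d) (Fin n → Fin d) ℂ),
          (∀ γ, 0 ≤ G γ) ∧ (∑ γ, G γ = 1) ∧
          (∀ γ m, (D γ m).PosSemidef) ∧ (∀ γ, ∑ m, D γ m = 1) ∧
          (1 / (n : ℝ)) * Real.logb 2 M > R - δ ∧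
          (⨆ sv : Fin n → 𝒮,
            1 - (1 / (M : ℝ)) * ∑ m, ∑ γ, G γ *
              (Matrix.trace (D γ m * tensorFam fun k' => ρ (f γ m k') (sv k'))).re) < β := by
  intro β hβ δ hδ
  set R2 := R * Real.log 2 with hR2
  have hl2 : 0 < Real.log 2 := Real.log_pos (by norm_num)
  have hR20 : 0 ≤ R2 := by positivity
  set g := I0 - R2 with hg
  have hgpos : 0 < g := by linarith
  set r := rate (g / 8) (16 * d) / 2 with hr
  have hrpos : 0 < r := by
    have : 0 < rate (g / 8) (16 * d) := rate_pos (by positivity) (by positivity)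
    positivity
  set r1 := min r (g / 4) with hr1
  have hr1pos : 0 < r1 := lt_min hrpos (by positivity)
  obtain ⟨S0, hS0⟩ := hAss (r1 / 2) (by positivity)
  have hlim := poly_exp_lim (3 * S0.card) (r := r1 / 2) (by positivity)
  obtain ⟨N, hN⟩ := eventually_atTop.1 (hlim.eventually (gt_mem_nhds hβ))
  refine ⟨max N 1, fun n hn => ?_⟩
  have hn1 : 0 < n := lt_of_lt_of_le one_pos ((le_max_right N 1).trans hn)
  have hnN : N ≤ n := (le_max_left N 1).trans hn
  have hnr : (0:ℝ) < n := by exact_mod_cast hn1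
  set M := ⌈Real.exp (n * R2)⌉₊ with hMdef
  have hMpos : 0 < M := Nat.ceil_pos.2 (Real.exp_pos _)
  have hMle : (M:ℝ) ≤ 2 * Real.exp (n * R2) := by
    have h1 := Nat.ceil_lt_add_one (Real.exp_pos (n * R2)).le
    have h2 : 1 ≤ Real.exp (n * R2) := Real.one_le_exp (by positivity)
    linarith
  obtain ⟨K, G, f, D, h1, h2, h3, h4, h5⟩ := direct_n ρ hρ P hI (ε := r1 / 2) (by positivity) S0 hS0
    (δ := g / 8) (by positivity) hn1 hMpos (Real.exp_pos (-(n * r1)))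
  refine ⟨M, K, G, f, D, h1, h2, h3, h4, ?_, ?_⟩
  · have hge : (n:ℝ) * R2 ≤ Real.log M := by
      rw [Real.le_log_iff_exp_le (by exact_mod_cast hMpos)]
      exact Nat.le_ceil _
    have : R ≤ (1 / (n : ℝ)) * Real.logb 2 M := by
      unfold Real.logb
      rw [← mul_div_assoc, le_div_iff₀ hl2, one_div, ← div_eq_inv_mul, le_div_iff₀ hnr]
      linarith
    linarith
  · refine lt_of_le_of_lt (ciSup_le fun sv => ?_) (hN n hnN)
    refine (h5 sv).trans ?_
    exact bound_n (min_le_left _ _) (min_le_right _ _) rfl rfl hr1pos hMle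
end PartJ

section PartK
set_option linter.unusedSectionVars false
open scoped MatrixOrder
open Matrix

variable {k : Type*} [Fintype k] [DecidableEq k] {d : Type*} [Fintype d] [DecidableEq d]

/-- Strong-converse type bound for one codeword. -/
lemma conv_word {τ : k → Matrix d d ℂ} (hτ : ∀ i, IsDensity (τ i)) {U : Matrix d d ℂ}
    (hU : IsUni U) {r' : d → ℝ} {κ : ℝ} (hκ : 0 < κ) (hκ1 : κ < 1) (hr : ∀ j, κ ≤ r' j)
    (hr1 : ∀ j, r' j ≤ 1) {D : Matrix (k → d) (k → d) ℂ} (hD : 0 ≤ D) (hD1 : D ≤ 1)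
    (hdpos : 0 < Fintype.card d)
    {δ : ℝ} (hδ : 0 < δ) {A B : ℝ}
    (hA : A = ∑ i, ∑ j, diagw U (τ i) j * (-Real.log (r' j))) (hB : B = ∑ i, ent (τ i)) :
    rtr (D * tensorFam τ) ≤
      2 * Real.exp (A - B + 2 * (Fintype.card k * δ)) * rtr (D * tensorFam (fun _ : k => sdiag U r'))
      + Real.exp (-(Fintype.card k * rate δ (16 * Fintype.card d)))
      + 2 * Real.exp (-(Fintype.card k * rate δ ((-Real.log κ) ^ 2 * Real.exp (-Real.log κ)))) := by
  set n : ℝ := ((Fintype.card k : ℕ) : ℝ) with hn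
  have hdr : (0:ℝ) < 16 * Fintype.card d := by positivity
  have hL : 0 < -Real.log κ := by
    have := Real.log_neg hκ hκ1
    linarith
  have hrpos : ∀ j, 0 < r' j := fun j => hκ.trans_le (hr j)
  let Ux : Matrix (k → d) (k → d) ℂ := tensorFam (fun i => specU (τ i))
  have hUx : IsUni Ux := tensorFam_uni fun _ => specU_uni _
  let V : Matrix (k → d) (k → d) ℂ := tensorFam (fun _ : k => U)
  have hV : IsUni V := tensorFam_uni fun _ => hU
  let q : (k → d) → Prop := fun j => ∏ i, specL (τ i) (j i) ≤ Real.exp (-(B - n * δ))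
  let p : (k → d) → Prop := fun j => Real.exp (-(A + n * δ)) ≤ ∏ i, r' (j i)
  classical
  have hspec : tensorFam τ = sdiag Ux (fun j => ∏ i, specL (τ i) (j i)) :=
    tensorFam_spec fun i => psd_herm (density_psd (hτ i))
  have hlnn : ∀ j : k → d, 0 ≤ ∏ i, specL (τ i) (j i) := fun j =>
    Finset.prod_nonneg fun i _ => specL_nonneg (density_psd (hτ i)) _
  let ρ1 : Matrix (k → d) (k → d) ℂ := sdiag Ux (fun j => if q j then ∏ i, specL (τ i) (j i) else 0)
  have hρ1_0 : 0 ≤ ρ1 := sdiag_psd _ fun j => by split_ifs; exacts [hlnn j, le_rfl]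
  have hρ1_le : ρ1 ≤ tensorFam τ := by
    rw [hspec]
    exact sdiag_mono _ fun j => by split_ifs; exacts [le_rfl, hlnn j]
  have hρ1_b : ρ1 ≤ Real.exp (-(B - n * δ)) • (1 : Matrix (k → d) (k → d) ℂ) := by
    rw [← sdiag_one hUx, ← sdiag_smul]
    refine sdiag_mono _ fun j => ?_
    split_ifs with h
    · rw [mul_one]; exact h
    · positivity
  -- first error
  have E1 : rtr (tensorFam τ - ρ1) ≤ Real.exp (-(n * rate δ (16 * Fintype.card d))) := by
    have h1 : rtr (tensorFam τ - ρ1)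
        = ∑ j : k → d, (if ¬ q j then 1 else 0) * ∏ i, specL (τ i) (j i) := by
      rw [← sum_diagw hUx, hspec, ← sdiag_sub]
      refine Finset.sum_congr rfl fun j _ => ?_
      rw [diagw_sdiag hUx]
      by_cases h : q j <;> simp [h]
    rw [h1]
    refine chernoff (fun i => specL (τ i)) (fun i a => Real.log (specL (τ i) a))
      (fun i a => specL_nonneg (density_psd (hτ i)) a) (fun i => sum_specL_density (hτ i)) hdr hδ ?_ _ ?_
    · intro i
      refine (Finset.sum_le_card_nsmul _ _ 16 fun a _ =>
        k16 (specL_nonneg (density_psd (hτ i)) a) (specL_le_one (hτ i) a)).trans ?_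
      rw [nsmul_eq_mul, Finset.card_univ]; linarith
    · intro j hj hz
      simp only [q, not_le] at hj
      have hlog := Real.log_lt_log (Real.exp_pos _) hj
      rw [Real.log_exp, Real.log_prod (fun i _ => hz i)] at hlog
      have hmean : ∑ i, ∑ a, specL (τ i) a * Real.log (specL (τ i) a) = - B := by
        rw [hB, ← Finset.sum_neg_distrib]
        refine Finset.sum_congr rfl fun i _ => ?_
        rw [ent, ← Finset.sum_neg_distrib]
        exact Finset.sum_congr rfl fun a _ => by rw [Real.negMulLog]; ring
      rw [hmean]
      linarith
  -- second error
  have E2 : rtr ((1 - proj V p) * tensorFam τ) ≤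
      Real.exp (-(n * rate δ ((-Real.log κ) ^ 2 * Real.exp (-Real.log κ)))) := by
    have h1 : rtr ((1 - proj V p) * tensorFam τ)
        = ∑ j : k → d, (if ¬ p j then 1 else 0) * ∏ i, diagw U (τ i) (j i) := by
      rw [rtr_mul_comm, proj_compl hV]
      unfold proj
      rw [rtr_mul_sdiag]
      refine Finset.sum_congr rfl fun j _ => ?_
      rw [diagw_tensor _ fun i => density_psd (hτ i)]
    rw [h1]
    have hw1 : ∀ i, ∑ a, diagw U (τ i) a = 1 := fun i => by rw [sum_diagw hU, density_rtr (hτ i)]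
    refine chernoff (fun i => diagw U (τ i)) (fun _ a => -Real.log (r' a))
      (fun i a => diagw_nonneg U (density_psd (hτ i)) a) hw1 (by positivity) hδ ?_ _ ?_
    · intro i
      refine kL _ _ (fun a => diagw_nonneg U (density_psd (hτ i)) a) (hw1 i) fun a => ?_
      have h2 := Real.log_nonpos (hrpos a).le (hr1 a)
      have h3 := Real.log_le_log hκ (hr a)
      rw [abs_of_nonneg (by linarith)]
      linarith
    · intro j hj _
      simp only [p, not_le] at hj
      have hpos : 0 < ∏ i, r' (j i) := Finset.prod_pos fun i _ => hrpos _
      have hlog := Real.log_lt_log hpos hj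
      rw [Real.log_exp, Real.log_prod (fun i _ => (hrpos _).ne')] at hlog
      rw [← hA, Finset.sum_neg_distrib]
      linarith
  -- assembling
  set Pj := proj V p with hPj
  have hPjh : Pjᴴ = Pj := proj_herm _ _
  have hPj'h : (1 - Pj)ᴴ = 1 - Pj := by rw [conjTranspose_sub, hPjh, conjTranspose_one]
  have s1 : rtr (D * tensorFam τ) ≤ rtr (D * ρ1) + Real.exp (-(n * rate δ (16 * Fintype.card d))) := by
    have h1 : rtr (D * tensorFam τ) = rtr (D * ρ1) + rtr (D * (tensorFam τ - ρ1)) := by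
      rw [mul_sub, rtr_sub]; ring
    have h2 := rtr_mul_mono hD1 (sub_nonneg.2 hρ1_le)
    rw [one_mul] at h2
    linarith
  have hpin := pinch hD hPjh hPj'h (by abel) one_pos
  have s2 : rtr (D * ρ1) ≤ 2 * rtr (Pj * D * Pj * ρ1) + 2 * rtr ((1 - Pj) * D * (1 - Pj) * ρ1) := by
    have := rtr_mul_mono hpin hρ1_0
    rw [add_mul, rtr_add, smul_mul_assoc, smul_mul_assoc, rtr_smul, rtr_smul] at this
    norm_num at this
    exact this
  have hPi'le : (1 - Pj) * D * (1 - Pj) ≤ 1 - Pj := by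
    have := conj_mono hD1 (1 - Pj)
    rw [hPj'h, mul_one] at this
    refine this.trans (le_of_eq ?_)
    rw [hPj, proj_compl hV, proj_sq hV]
  have hPi'0 : 0 ≤ 1 - Pj := sub_nonneg.2 (proj_le_one hV _)
  have s3 : rtr ((1 - Pj) * D * (1 - Pj) * ρ1) ≤
      Real.exp (-(n * rate δ ((-Real.log κ) ^ 2 * Real.exp (-Real.log κ)))) :=
    (rtr_mul_mono hPi'le hρ1_0).trans ((rtr_mul_mono' hρ1_le hPi'0).trans E2)
  have hPD0 : 0 ≤ Pj * D * Pj := by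
    have := psd_conj hD Pj
    rwa [hPjh] at this
  have hPσ : Pj ≤ Real.exp (A + n * δ) • tensorFam (fun _ : k => sdiag U r') := by
    rw [tensorFam_sdiag, ← sdiag_smul]
    refine sdiag_mono _ fun j => ?_
    have hpos : 0 < ∏ i, r' (j i) := Finset.prod_pos fun i _ => hrpos _
    split_ifs with h
    · have h2 := mul_le_mul_of_nonneg_left h (Real.exp_pos (A + n * δ)).le
      rw [← Real.exp_add, add_neg_cancel, Real.exp_zero] at h2
      exact h2
    · positivity
  have s4 : rtr (Pj * D * Pj * ρ1) ≤
      Real.exp (A - B + 2 * (n * δ)) * rtr (D * tensorFam (fun _ : k => sdiag U r')) := by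
    have h1 := rtr_mul_mono' hρ1_b hPD0
    rw [mul_smul_comm, mul_one, rtr_smul] at h1
    have h2 : rtr (Pj * D * Pj) = rtr (D * Pj) := by
      rw [rtr_mul_comm, ← mul_assoc, hPj, proj_sq hV, rtr_mul_comm]
    have h3 := rtr_mul_mono' hPσ hD
    rw [mul_smul_comm, rtr_smul] at h3
    rw [h2] at h1
    refine h1.trans ((mul_le_mul_of_nonneg_left h3 (Real.exp_pos _).le).trans (le_of_eq ?_))
    rw [← mul_assoc, ← Real.exp_add]
    congr 2; ring
  linarith

/-- Averaged converse for a code with weights `W`. -/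
lemma conv_core {X Ω : Type*} [Fintype X] [DecidableEq X] [Fintype Ω] [Nonempty k]
    {τ : X → Matrix d d ℂ} (hτ : ∀ x, IsDensity (τ x)) {P : X → ℝ} (hP : ∀ x, 0 ≤ P x)
    (hP1 : ∑ x, P x = 1)
    (W : Ω → ℝ) (hW : ∀ ω, 0 ≤ W ω) (hW1 : ∑ ω, W ω = 1) (f : Ω → k → X)
    (hPw : ∀ w : X → ℝ, ∑ x, P x * w x = ∑ ω, W ω * ((1 / (Fintype.card k : ℝ)) * ∑ i, w (f ω i)))
    (D : Ω → Matrix (k → d) (k → d) ℂ) (hD : ∀ ω, 0 ≤ D ω) (hD1 : ∀ ω, D ω ≤ 1) {mi : ℝ}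
    (hmi : 0 ≤ mi)
    (hDs : ∑ ω, W ω • D ω = mi • (1 : Matrix (k → d) (k → d) ℂ)) {β : ℝ}
    (hβ : 1 - β ≤ ∑ ω, W ω * rtr (D ω * tensorFam (fun i => τ (f ω i))))
    {δ κ θ : ℝ} (hδ : 0 < δ) (hκ : 0 < κ) (hκ1 : κ < 1) (hθ : 0 ≤ θ + Fintype.card d) :
    (θ + Fintype.card d) * (1 - β - (2 * Real.exp (Fintype.card k * (θ + 2 * δ + Fintype.card d * κ)) * mi
      + Real.exp (-(Fintype.card k * rate δ (16 * Fintype.card d)))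
      + 2 * Real.exp (-(Fintype.card k * rate δ ((-Real.log κ) ^ 2 * Real.exp (-Real.log κ))))))
      - Fintype.card d ≤ ent (∑ x, P x • τ x) - ∑ x, P x * ent (τ x) := by
  classical
  set n : ℝ := ((Fintype.card k : ℕ) : ℝ) with hn
  have hnpos : 0 < n := by
    have := Fintype.card_pos (α := k)
    rw [hn]; exact_mod_cast this
  set dd : ℝ := ((Fintype.card d : ℕ) : ℝ) with hdd
  set σ := ∑ x, P x • τ x with hσ
  have hσd : IsDensity σ := density_sum _ (fun x _ => hP x) hP1 hτ
  have hdpos := density_card_pos hσd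
  set U := specU σ with hUdef
  have hU : IsUni U := specU_uni σ
  set r' : d → ℝ := fun j => max (specL σ j) κ with hr'
  have hr1 : ∀ j, r' j ≤ 1 := fun j => max_le (specL_le_one hσd j) hκ1.le
  have hrκ : ∀ j, κ ≤ r' j := fun j => le_max_right _ _
  set e1 := Real.exp (-(n * rate δ (16 * dd))) with he1
  set e2 := Real.exp (-(n * rate δ ((-Real.log κ) ^ 2 * Real.exp (-Real.log κ)))) with he2
  have he10 : 0 < e1 := Real.exp_pos _
  have he20 : 0 < e2 := Real.exp_pos _
  let w : X → ℝ := fun x => ∑ j, diagw U (τ x) j * (-Real.log (r' j)) - ent (τ x)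
  have hw : ∀ x, -dd ≤ w x := by
    intro x
    have h1 := ent_le (hτ x)
    have h2 : 0 ≤ ∑ j, diagw U (τ x) j * (-Real.log (r' j)) := Finset.sum_nonneg fun j _ =>
      mul_nonneg (diagw_nonneg _ (density_psd (hτ x)) _)
        (by have := Real.log_nonpos (hκ.le.trans (hrκ j)) (hr1 j); linarith)
    simp only [w]
    linarith
  have hwavg : ∑ x, P x * w x ≤ ent σ - ∑ x, P x * ent (τ x) := by
    simp only [w, mul_sub, Finset.sum_sub_distrib]
    refine sub_le_sub_right ?_ _
    have h1 : ∑ x, P x * ∑ j, diagw U (τ x) j * (-Real.log (r' j))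
        = ∑ j, specL σ j * (-Real.log (r' j)) := by
      simp only [Finset.mul_sum]
      rw [Finset.sum_comm]
      refine Finset.sum_congr rfl fun j _ => ?_
      have h2 : specL σ j = ∑ x, P x * diagw U (τ x) j := by
        rw [← diagw_spec (psd_herm (density_psd hσd)), ← hUdef]
        conv_lhs => rw [hσ]
        rw [diagw_sum]
        exact Finset.sum_congr rfl fun x _ => diagw_smul _ _ _ _
      rw [h2, Finset.sum_mul]
      exact Finset.sum_congr rfl fun x _ => by ring
    rw [h1, ent]
    refine Finset.sum_le_sum fun j _ => ?_
    rw [Real.negMulLog]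
    rcases (specL_nonneg (density_psd hσd) j).eq_or_lt with h | h
    · rw [← h]; simp
    · have h3 : Real.log (specL σ j) ≤ Real.log (r' j) := Real.log_le_log h (le_max_left _ _)
      nlinarith
  let z : Ω → ℝ := fun ω => (1 / n) * ∑ i, w (f ω i)
  have hz : ∀ ω, -dd ≤ z ω := by
    intro ω
    have : ∑ i : k, (-dd) ≤ ∑ i, w (f ω i) := Finset.sum_le_sum fun i _ => hw _
    rw [Finset.sum_const, Finset.card_univ, nsmul_eq_mul, ← hn] at this
    simp only [z]
    rw [one_div, ← div_eq_inv_mul, le_div_iff₀ hnpos]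
    linarith
  let σn : Matrix (k → d) (k → d) ℂ := tensorFam (fun _ : k => sdiag U r')
  have hσn0 : 0 ≤ σn := tensorFam_psd fun _ => sdiag_psd _ fun j => hκ.le.trans (hrκ j)
  have hσntr : rtr σn ≤ Real.exp (n * (dd * κ)) := by
    have h1 : (sdiag U r').trace = ((∑ j, r' j : ℝ) : ℂ) := by
      unfold sdiag
      rw [Matrix.trace_mul_comm, ← Matrix.mul_assoc, hU.1, one_mul, Matrix.trace_diagonal]
      push_cast; rfl
    have h2 : rtr σn = (∑ j, r' j) ^ (Fintype.card k) := by
      simp only [rtr, σn]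
      rw [tensorFam_trace, h1, Finset.prod_const, Finset.card_univ, ← Complex.ofReal_pow, Complex.ofReal_re]
    have h3 : ∑ j, r' j ≤ 1 + dd * κ := by
      calc _ ≤ ∑ j, (specL σ j + κ) := Finset.sum_le_sum fun j _ =>
            max_le (by linarith) (by linarith [specL_nonneg (density_psd hσd) j])
        _ = _ := by
            rw [Finset.sum_add_distrib, sum_specL_density hσd, Finset.sum_const, Finset.card_univ,
              nsmul_eq_mul]
    have h4 : 0 ≤ ∑ j, r' j := Finset.sum_nonneg fun j _ => hκ.le.trans (hrκ j)
    rw [h2, hn, Real.exp_nat_mul]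
    refine pow_le_pow_left₀ h4 (h3.trans ?_) _
    have := Real.add_one_le_exp (dd * κ)
    linarith
  have hword : ∀ ω, rtr (D ω * tensorFam (fun i => τ (f ω i))) ≤
      (if θ ≤ z ω then 1 else 0) + 2 * Real.exp (n * (θ + 2 * δ)) * rtr (D ω * σn) + e1 + 2 * e2 := by
    intro ω
    have hDσ : 0 ≤ rtr (D ω * σn) := rtr_mul_nonneg (hD ω) hσn0
    split_ifs with h
    · have h1 := rtr_mul_mono (hD1 ω) (density_psd (density_tensor fun i => hτ (f ω i)))
      rw [one_mul, density_rtr (density_tensor fun i => hτ (f ω i))] at h1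
      have : 0 ≤ 2 * Real.exp (n * (θ + 2 * δ)) * rtr (D ω * σn) := by positivity
      linarith
    · have h1 := conv_word (fun i => hτ (f ω i)) hU hκ hκ1 hrκ hr1 (hD ω) (hD1 ω) hdpos hδ rfl rfl
      have h2 : ∑ i, ∑ j, diagw U (τ (f ω i)) j * (-Real.log (r' j)) - ∑ i, ent (τ (f ω i)) = n * z ω := by
        simp only [z, w, Finset.sum_sub_distrib]
        field_simp
      rw [h2] at h1
      have h3 : Real.exp (n * z ω + 2 * (n * δ)) ≤ Real.exp (n * (θ + 2 * δ)) := by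
        apply Real.exp_le_exp.2
        push Not at h
        nlinarith
      have h4 : 2 * Real.exp (n * z ω + 2 * (n * δ)) * rtr (D ω * σn)
          ≤ 2 * Real.exp (n * (θ + 2 * δ)) * rtr (D ω * σn) := by gcongr
      have h5 := h1.trans (add_le_add_left (add_le_add_left h4 _) _)
      linarith
  set p := ∑ ω, W ω * (if θ ≤ z ω then 1 else 0) with hp
  have hpz : (θ + dd) * p - dd ≤ ∑ x, P x * w x := by
    rw [hPw w]
    have : (θ + dd) * p - dd = ∑ ω, W ω * ((θ + dd) * (if θ ≤ z ω then 1 else 0) - dd) := by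
      simp only [mul_sub, Finset.sum_sub_distrib]
      rw [← Finset.sum_mul, hW1, hp, Finset.mul_sum, one_mul]
      congr 1
      exact Finset.sum_congr rfl fun ω _ => by ring
    rw [this]
    refine Finset.sum_le_sum fun ω _ => mul_le_mul_of_nonneg_left ?_ (hW ω)
    change _ ≤ z ω
    split_ifs with h
    · linarith
    · linarith [hz ω]
  have hpl : 1 - β ≤ p + 2 * Real.exp (n * (θ + 2 * δ)) * (mi * rtr σn) + e1 + 2 * e2 := by
    have hs : ∑ ω, W ω * rtr (D ω * σn) = mi * rtr σn := by
      have : rtr ((∑ ω, W ω • D ω) * σn) = mi * rtr σn := by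
        rw [hDs, smul_mul_assoc, one_mul, rtr_smul]
      rw [← this, Finset.sum_mul, rtr_sum]
      exact Finset.sum_congr rfl fun ω _ => by rw [smul_mul_assoc, rtr_smul]
    refine hβ.trans ((Finset.sum_le_sum fun ω _ => mul_le_mul_of_nonneg_left (hword ω) (hW ω)).trans
      (le_of_eq ?_))
    simp only [mul_add, Finset.sum_add_distrib]
    rw [← Finset.sum_mul, ← Finset.sum_mul, hW1, ← hs, hp, Finset.mul_sum]
    rw [one_mul, one_mul]
    congr 3
    exact Finset.sum_congr rfl fun ω _ => by ring
  have hfin : 2 * Real.exp (n * (θ + 2 * δ)) * (mi * rtr σn) ≤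
      2 * Real.exp (n * (θ + 2 * δ + dd * κ)) * mi := by
    calc _ ≤ 2 * Real.exp (n * (θ + 2 * δ)) * (mi * Real.exp (n * (dd * κ))) := by gcongr
      _ = _ := by
        have : Real.exp (n * (θ + 2 * δ + dd * κ)) = Real.exp (n * (θ + 2 * δ)) * Real.exp (n * (dd * κ)) := by
          rw [← Real.exp_add]; congr 1; ring
        rw [this]; ring
  have hlast : (θ + dd) * (1 - β - (2 * Real.exp (n * (θ + 2 * δ + dd * κ)) * mi + e1 + 2 * e2))
      ≤ (θ + dd) * p := mul_le_mul_of_nonneg_left (by linarith) hθ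
  linarith
end PartK

section PartL
set_option linter.unusedSectionVars false
open scoped MatrixOrder
open Matrix

lemma exp_lim {r : ℝ} (hr : 0 < r) : Tendsto (fun n : ℕ => Real.exp (-((n:ℝ) * r))) atTop (nhds 0) := by
  have h := (poly_exp_lim 0 hr).const_mul (1 / 22)
  rw [mul_zero] at h
  refine h.congr fun n => ?_
  rw [pow_zero]; ring

/-- Averaging the success probability over an i.i.d. state sequence. -/
lemma success_avg {𝒳 𝒮 Ω : Type*} [Fintype Ω] {d n : ℕ}
    {ρ : 𝒳 → 𝒮 → Matrix (Fin d) (Fin d) ℂ} (Q : FinProb 𝒮) (W : Ω → ℝ)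
    (f : Ω → Fin n → 𝒳) (D : Ω → Matrix (Fin n → Fin d) (Fin n → Fin d) ℂ) {b : ℝ}
    (h : ∀ sv : Fin n → 𝒮, b ≤ ∑ ω, W ω * rtr (D ω * tensorFam fun i => ρ (f ω i) (sv i))) :
    b ≤ ∑ ω, W ω * rtr (D ω * tensorFam fun i => rhoQ ρ Q.1 (f ω i)) := by
  classical
  have h1 : ∀ ω, tensorFam (fun i => rhoQ ρ Q.1 (f ω i)) =
      ∑ sv ∈ Fintype.piFinset (fun _ : Fin n => Q.1.support), (∏ i, Q.1 (sv i)) •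
        tensorFam (fun i => ρ (f ω i) (sv i)) := fun ω =>
    tensorFam_sum (fun _ : Fin n => Q.1.support) (fun _ s => Q.1 s) (fun i s => ρ (f ω i) s)
  have h2 : ∑ sv ∈ Fintype.piFinset (fun _ : Fin n => Q.1.support), (∏ i, Q.1 (sv i)) = 1 := by
    rw [← Finset.prod_univ_sum (fun _ : Fin n => Q.1.support) (fun _ s => Q.1 s)]
    have : ∑ s ∈ Q.1.support, Q.1 s = 1 := Q.2.2
    simp [this]
  calc b = ∑ sv ∈ Fintype.piFinset (fun _ : Fin n => Q.1.support), (∏ i, Q.1 (sv i)) * b := by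
        rw [← Finset.sum_mul, h2, one_mul]
    _ ≤ ∑ sv ∈ Fintype.piFinset (fun _ : Fin n => Q.1.support), (∏ i, Q.1 (sv i)) *
          ∑ ω, W ω * rtr (D ω * tensorFam fun i => ρ (f ω i) (sv i)) :=
        Finset.sum_le_sum fun sv _ => mul_le_mul_of_nonneg_left (h sv)
          (Finset.prod_nonneg fun i _ => Q.2.1 _)
    _ = _ := by
        simp only [h1, Finset.mul_sum, rtr_sum, mul_smul_comm, rtr_smul]
        rw [Finset.sum_comm]
        refine Finset.sum_congr rfl fun ω _ => Finset.sum_congr rfl fun s _ => by ring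

lemma converse {𝒳 𝒮 : Type*} [Fintype 𝒳] [DecidableEq 𝒳] [Nonempty 𝒮] {d : ℕ} (hd : 0 < d)
    (ρ : 𝒳 → 𝒮 → Matrix (Fin d) (Fin d) ℂ) (hρ : ∀ x s, IsDensity (ρ x s)) {V : ℝ}
    (hV : ∀ P : ProbDist 𝒳, ∀ η > 0, ∃ Q : FinProb 𝒮, mutInfI ρ P.1 Q.1 * Real.log 2 < V * Real.log 2 + η)
    (hVd : -(d:ℝ) ≤ V * Real.log 2) {R : ℝ}
    (hR : ∀ β > (0 : ℝ), ∀ δ > (0 : ℝ), ∃ N : ℕ, ∀ n ≥ N,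
        ∃ (M k : ℕ) (G : Fin k → ℝ) (f : Fin k → Fin M → (Fin n → 𝒳))
          (D : Fin k → Fin M → Matrix (Fin n → Fin d) (Fin n → Fin d) ℂ),
          (∀ γ, 0 ≤ G γ) ∧ (∑ γ, G γ = 1) ∧
          (∀ γ m, (D γ m).PosSemidef) ∧ (∀ γ, ∑ m, D γ m = 1) ∧
          (1 / (n : ℝ)) * Real.logb 2 M > R - δ ∧
          (⨆ sv : Fin n → 𝒮,
            1 - (1 / (M : ℝ)) * ∑ m, ∑ γ, G γ *
              (Matrix.trace (D γ m * tensorFam fun k' => ρ (f γ m k') (sv k'))).re) < β) :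
    R ≤ V := by
  by_contra hlt
  push Not at hlt
  have hl2 : 0 < Real.log 2 := Real.log_pos (by norm_num)
  have hdr : (0:ℝ) < d := by exact_mod_cast hd
  set g := (R - V) * Real.log 2 with hg
  have hgpos : 0 < g := mul_pos (by linarith) hl2
  set θ := V * Real.log 2 + g / 2 with hθ
  have hθd : 0 < θ + d := by linarith
  set β := g / (8 * (θ + d)) with hβ
  have hβpos : 0 < β := by positivity
  set δ' := g / (8 * Real.log 2) with hδ'
  have hδ'pos : 0 < δ' := by positivity
  have hδ'l : δ' * Real.log 2 = g / 8 := by rw [hδ']; field_simp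
  set δ := g / 32 with hδ
  have hδpos : 0 < δ := by positivity
  set κ := min (1 / 2) (g / (8 * d)) with hκ
  have hκpos : 0 < κ := lt_min (by norm_num) (by positivity)
  have hκ1 : κ < 1 := lt_of_le_of_lt (min_le_left _ _) (by norm_num)
  have hdκ : d * κ ≤ g / 8 := by
    calc d * κ ≤ d * (g / (8 * d)) := by gcongr; exact min_le_right _ _
      _ = g / 8 := by field_simp
  have hL : 0 < -Real.log κ := by
    have := Real.log_neg hκpos hκ1
    linarith
  set r1 := rate δ (16 * d) with hr1
  have hr1pos : 0 < r1 := rate_pos hδpos (by positivity)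
  set r2 := rate δ ((-Real.log κ) ^ 2 * Real.exp (-Real.log κ)) with hr2
  have hr2pos : 0 < r2 := rate_pos hδpos (by positivity)
  obtain ⟨N1, hN1⟩ := hR β hβpos δ' hδ'pos
  have hlim : Tendsto (fun n : ℕ => 2 * Real.exp (-((n:ℝ) * (g / 8))) + Real.exp (-((n:ℝ) * r1))
      + 2 * Real.exp (-((n:ℝ) * r2))) atTop (nhds 0) := by
    have := (((exp_lim (r := g / 8) (by positivity)).const_mul 2).add (exp_lim hr1pos)).add
      ((exp_lim hr2pos).const_mul 2)
    simpa using this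
  obtain ⟨N2, hN2⟩ := eventually_atTop.1 (hlim.eventually (gt_mem_nhds hβpos))
  set n := max (max N1 N2) 1 with hn
  have hnpos : 0 < n := lt_of_lt_of_le one_pos (le_max_right _ _)
  have hnr : (0:ℝ) < n := by exact_mod_cast hnpos
  have hnN1 : N1 ≤ n := (le_max_left _ _).trans (le_max_left _ _)
  have hnN2 : N2 ≤ n := (le_max_right _ _).trans (le_max_left _ _)
  have hsmall := hN2 n hnN2
  obtain ⟨M, K, G, f, D, hG0, hG1, hD0, hD1, hrate, herr⟩ := hN1 n hnN1
  have : Nonempty (Fin n) := ⟨⟨0, hnpos⟩⟩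
  have : Nonempty (Fin d) := ⟨⟨0, hd⟩⟩
  have hK : 0 < K := by
    rcases Nat.eq_zero_or_pos K with h | h
    · subst h; simp at hG1
    · exact h
  have hM : 0 < M := by
    rcases Nat.eq_zero_or_pos M with h | h
    · subst h
      have := hD1 ⟨0, hK⟩
      simp at this
    · exact h
  have hMr : (0:ℝ) < M := by exact_mod_cast hM
  have hD0' : ∀ γ m, 0 ≤ D γ m := fun γ m => Matrix.nonneg_iff_posSemidef.2 (hD0 γ m)
  -- weights
  let W : Fin K × Fin M → ℝ := fun ω => G ω.1 / M
  have hW : ∀ ω, 0 ≤ W ω := fun ω => div_nonneg (hG0 _) hMr.le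
  have hW1 : ∑ ω, W ω = 1 := by
    rw [Fintype.sum_prod_type]
    simp only [W, Finset.sum_const, Finset.card_univ, Fintype.card_fin, nsmul_eq_mul]
    rw [← hG1]
    exact Finset.sum_congr rfl fun γ _ => by field_simp
  have hDs : ∑ ω, W ω • D ω.1 ω.2 = (1 / (M:ℝ)) • (1 : Matrix (Fin n → Fin d) (Fin n → Fin d) ℂ) := by
    rw [Fintype.sum_prod_type]
    simp only [W, ← Finset.smul_sum, hD1]
    rw [← Finset.sum_smul, ← Finset.sum_div, hG1]
  have hexpr : ∀ sv : Fin n → 𝒮, (1 / (M : ℝ)) * ∑ m, ∑ γ, G γ *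
              (Matrix.trace (D γ m * tensorFam fun k' => ρ (f γ m k') (sv k'))).re
      = ∑ ω, W ω * rtr (D ω.1 ω.2 * tensorFam fun i => ρ (f ω.1 ω.2 i) (sv i)) := by
    intro sv
    rw [Fintype.sum_prod_type, Finset.sum_comm, Finset.mul_sum]
    refine Finset.sum_congr rfl fun γ _ => ?_
    rw [Finset.mul_sum]
    refine Finset.sum_congr rfl fun m _ => ?_
    simp only [W, rtr]; ring
  have hbdd : BddAbove (Set.range fun sv : Fin n → 𝒮 => 1 - (1 / (M : ℝ)) * ∑ m, ∑ γ, G γ *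
              (Matrix.trace (D γ m * tensorFam fun k' => ρ (f γ m k') (sv k'))).re) := by
    refine ⟨1, ?_⟩
    rintro _ ⟨sv, rfl⟩
    simp only [hexpr]
    have : 0 ≤ ∑ ω, W ω * rtr (D ω.1 ω.2 * tensorFam fun i => ρ (f ω.1 ω.2 i) (sv i)) :=
      Finset.sum_nonneg fun ω _ => mul_nonneg (hW ω) (rtr_mul_nonneg (hD0' _ _)
        (density_psd (density_tensor fun i => hρ _ _)))
    linarith
  have hsucc : ∀ sv : Fin n → 𝒮, 1 - β ≤
      ∑ ω, W ω * rtr (D ω.1 ω.2 * tensorFam fun i => ρ (f ω.1 ω.2 i) (sv i)) := by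
    intro sv
    have h1 := (le_ciSup hbdd sv).trans herr.le
    simp only [hexpr] at h1
    linarith
  -- empirical distribution
  let Pb : 𝒳 → ℝ := fun x => ∑ ω, W ω * ((1 / (n:ℝ)) * ∑ i, if f ω.1 ω.2 i = x then 1 else 0)
  have hPw : ∀ w : 𝒳 → ℝ, ∑ x, Pb x * w x = ∑ ω, W ω * ((1 / (n : ℝ)) * ∑ i, w (f ω.1 ω.2 i)) := by
    intro w
    simp only [Pb, Finset.sum_mul]
    rw [Finset.sum_comm]
    refine Finset.sum_congr rfl fun ω _ => ?_
    simp only [mul_assoc]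
    rw [← Finset.mul_sum, ← Finset.mul_sum]
    congr 2
    simp only [Finset.sum_mul]
    rw [Finset.sum_comm]
    refine Finset.sum_congr rfl fun i _ => ?_
    simp
  have hPb0 : ∀ x, 0 ≤ Pb x := fun x => Finset.sum_nonneg fun ω _ => mul_nonneg (hW ω)
    (mul_nonneg (by positivity) (Finset.sum_nonneg fun i _ => by split_ifs <;> norm_num))
  have hPb1 : ∑ x, Pb x = 1 := by
    have := hPw (fun _ => 1)
    simp only [mul_one, Finset.sum_const, Finset.card_univ, Fintype.card_fin, nsmul_eq_mul] at this
    rw [this, one_div, inv_mul_cancel₀ hnr.ne']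
    simp only [mul_one]
    exact hW1
  obtain ⟨Q, hQ⟩ := hV ⟨Pb, hPb0, hPb1⟩ (g / 8) (by positivity)
  rw [mutInf_eq hρ] at hQ
  have hcore := conv_core (k := Fin n) (fun x => rhoQ_density hρ Q x) hPb0 hPb1 W hW hW1
    (fun ω => f ω.1 ω.2) (by rw [Fintype.card_fin]; exact hPw) (fun ω => D ω.1 ω.2) (fun ω => hD0' _ _)
    (fun ω => by
      rw [← hD1 ω.1]
      exact Finset.single_le_sum (fun i _ => hD0' ω.1 i) (Finset.mem_univ ω.2))
    (mi := 1 / (M:ℝ)) (by positivity) hDs (success_avg Q W _ _ hsucc) (θ := θ) hδpos hκpos hκ1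
    (by rw [Fintype.card_fin]; exact hθd.le)
  rw [Fintype.card_fin, Fintype.card_fin] at hcore
  -- size of the code
  have hMexp : 1 / (M:ℝ) ≤ Real.exp (-(n * (R * Real.log 2 - g / 8))) := by
    have h1 : (n:ℝ) * (R * Real.log 2 - g / 8) ≤ Real.log M := by
      have h2 : R - δ' ≤ (1 / (n : ℝ)) * (Real.log M / Real.log 2) := hrate.le
      rw [← mul_div_assoc, le_div_iff₀ hl2, one_div, ← div_eq_inv_mul, le_div_iff₀ hnr] at h2
      have h3 : (R - δ') * Real.log 2 = R * Real.log 2 - g / 8 := by rw [sub_mul, hδ'l]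
      rw [h3] at h2
      linarith
    rw [Real.exp_neg, one_div]
    refine inv_anti₀ (Real.exp_pos _) ?_
    rw [← Real.le_log_iff_exp_le hMr]
    exact h1
  have hmain : 2 * Real.exp (n * (θ + 2 * δ + d * κ)) * (1 / (M:ℝ)) ≤ 2 * Real.exp (-((n:ℝ) * (g / 8))) := by
    calc _ ≤ 2 * Real.exp (n * (θ + 2 * δ + d * κ)) * Real.exp (-(n * (R * Real.log 2 - g / 8))) := by
          gcongr
      _ = 2 * Real.exp (n * (θ + 2 * δ + d * κ) + -(n * (R * Real.log 2 - g / 8))) := by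
          rw [Real.exp_add]; ring
      _ ≤ _ := by
          gcongr
          have h1 : θ + 2 * δ + d * κ - (R * Real.log 2 - g / 8) ≤ -(g / 8) := by
            have : R * Real.log 2 = V * Real.log 2 + g := by rw [hg]; ring
            rw [this, hθ, hδ]; linarith
          have := mul_le_mul_of_nonneg_left h1 hnr.le
          linarith
  have hcon : (θ + d) * (1 - β - β) - d ≤ V * Real.log 2 + g / 8 := by
    refine le_trans ?_ (hcore.trans hQ.le)
    have := mul_le_mul_of_nonneg_left (a := θ + d) (b := 1 - β - β)
      (c := 1 - β - (2 * Real.exp (n * (θ + 2 * δ + d * κ)) * (1 / (M:ℝ)) + Real.exp (-(n * r1))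
        + 2 * Real.exp (-(n * r2)))) (by linarith) hθd.le
    linarith
  have hββ : (θ + d) * β = g / 8 := by rw [hβ]; field_simp
  have : (θ + d) * (1 - β - β) - d = θ - 2 * ((θ + d) * β) := by ring
  rw [this, hββ, hθ] at hcon
  linarith

lemma mutInf_bounds {𝒳 𝒮 : Type*} [Fintype 𝒳] [DecidableEq 𝒳] {d : ℕ}
    {ρ : 𝒳 → 𝒮 → Matrix (Fin d) (Fin d) ℂ} (hρ : ∀ x s, IsDensity (ρ x s)) (P : ProbDist 𝒳)
    (Q : FinProb 𝒮) : -(d:ℝ) ≤ mutInfI ρ P.1 Q.1 * Real.log 2 ∧ mutInfI ρ P.1 Q.1 * Real.log 2 ≤ d := by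
  rw [mutInf_eq hρ]
  have hτ := fun x => rhoQ_density hρ Q x
  have hσ : IsDensity (∑ x, P.1 x • rhoQ ρ Q.1 x) := density_sum _ (fun x _ => P.2.1 x) P.2.2 hτ
  have h1 := ent_le hσ
  have h2 := ent_nonneg hσ
  rw [Fintype.card_fin] at h1
  have h3 : 0 ≤ ∑ x, P.1 x * ent (rhoQ ρ Q.1 x) :=
    Finset.sum_nonneg fun x _ => mul_nonneg (P.2.1 x) (ent_nonneg (hτ x))
  have h4 : ∑ x, P.1 x * ent (rhoQ ρ Q.1 x) ≤ d := by
    calc _ ≤ ∑ x, P.1 x * (d:ℝ) := Finset.sum_le_sum fun x _ => mul_le_mul_of_nonneg_left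
          (by have := ent_le (hτ x); rwa [Fintype.card_fin] at this) (P.2.1 x)
      _ = d := by rw [← Finset.sum_mul, P.2.2, one_mul]
  exact ⟨by linarith, by linarith⟩

end PartL

/-- Under Assumption A, the random code capacity of the CQ-AVC equals
`sup_P inf_Q I[X;B]_{P,Q}`. The random code capacity is the supremum of the set of
achievable random code rates. -/
theorem statement5 {𝒳 𝒮 : Type*} [Fintype 𝒳] [DecidableEq 𝒳] [Nonempty 𝒳] [Nonempty 𝒮]
    {d : ℕ}
    (ρ : 𝒳 → 𝒮 → Matrix (Fin d) (Fin d) ℂ)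
    (hρ : ∀ x s, IsDensity (ρ x s))
    (hAss : AssumptionA ρ) :
    sSup {R : ℝ | 0 ≤ R ∧
      ∀ β > (0 : ℝ), ∀ δ > (0 : ℝ), ∃ N : ℕ, ∀ n ≥ N,
        ∃ (M k : ℕ) (G : Fin k → ℝ) (f : Fin k → Fin M → (Fin n → 𝒳))
          (D : Fin k → Fin M → Matrix (Fin n → Fin d) (Fin n → Fin d) ℂ),
          (∀ γ, 0 ≤ G γ) ∧ (∑ γ, G γ = 1) ∧
          (∀ γ m, (D γ m).PosSemidef) ∧ (∀ γ, ∑ m, D γ m = 1) ∧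
          (1 / (n : ℝ)) * Real.logb 2 M > R - δ ∧
          (⨆ sv : Fin n → 𝒮,
            1 - (1 / (M : ℝ)) * ∑ m, ∑ γ, G γ *
              (Matrix.trace (D γ m * tensorFam fun k' => ρ (f γ m k') (sv k'))).re) < β} =
      ⨆ P : ProbDist 𝒳, ⨅ Q : FinProb 𝒮, mutInfI ρ P.1 Q.1 := by
  classical
  obtain ⟨x0⟩ := ‹Nonempty 𝒳›
  obtain ⟨s0⟩ := ‹Nonempty 𝒮›
  have hd : 0 < d := by
    have := density_card_pos (hρ x0 s0)
    rwa [Fintype.card_fin] at this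
  have : Nonempty 𝒮 := ⟨s0⟩
  have : Nonempty (ProbDist 𝒳) := ⟨⟨fun x => if x = x0 then 1 else 0,
    fun x => by dsimp only; split_ifs <;> norm_num, by simp⟩⟩
  have : Nonempty (FinProb 𝒮) := ⟨⟨Finsupp.single s0 1, fun s => by
    rw [Finsupp.single_apply]; split_ifs <;> norm_num, by
    rw [Finsupp.sum_single_index rfl]⟩⟩
  have hl2 : 0 < Real.log 2 := Real.log_pos (by norm_num)
  have hlb : ∀ (P : ProbDist 𝒳) (Q : FinProb 𝒮), -(d:ℝ) / Real.log 2 ≤ mutInfI ρ P.1 Q.1 :=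
    fun P Q => (div_le_iff₀ hl2).2 (mutInf_bounds hρ P Q).1
  have hub : ∀ (P : ProbDist 𝒳) (Q : FinProb 𝒮), mutInfI ρ P.1 Q.1 ≤ (d:ℝ) / Real.log 2 :=
    fun P Q => (le_div_iff₀ hl2).2 (mutInf_bounds hρ P Q).2
  have hbb : ∀ P : ProbDist 𝒳, BddBelow (Set.range fun Q : FinProb 𝒮 => mutInfI ρ P.1 Q.1) := by
    intro P
    refine ⟨-(d:ℝ) / Real.log 2, ?_⟩
    rintro _ ⟨Q, rfl⟩
    exact hlb P Q
  have hba : BddAbove (Set.range fun P : ProbDist 𝒳 => ⨅ Q : FinProb 𝒮, mutInfI ρ P.1 Q.1) := by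
    refine ⟨(d:ℝ) / Real.log 2, ?_⟩
    rintro _ ⟨P, rfl⟩
    obtain ⟨Q⟩ := ‹Nonempty (FinProb 𝒮)›
    exact (ciInf_le (hbb P) Q).trans (hub P Q)
  set V := ⨆ P : ProbDist 𝒳, ⨅ Q : FinProb 𝒮, mutInfI ρ P.1 Q.1 with hVdef
  have hVd : -(d:ℝ) ≤ V * Real.log 2 := by
    rw [← div_le_iff₀ hl2]
    obtain ⟨P⟩ := ‹Nonempty (ProbDist 𝒳)›
    exact (le_ciInf (hlb P)).trans (le_ciSup hba P)
  have hVQ : ∀ P : ProbDist 𝒳, ∀ η > 0, ∃ Q : FinProb 𝒮,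
      mutInfI ρ P.1 Q.1 * Real.log 2 < V * Real.log 2 + η := by
    intro P η hη
    have h1 : ⨅ Q : FinProb 𝒮, mutInfI ρ P.1 Q.1 < V + η / Real.log 2 :=
      lt_of_le_of_lt (le_ciSup hba P) (lt_add_of_pos_right _ (by positivity))
    obtain ⟨Q, hQ⟩ := exists_lt_of_ciInf_lt h1
    refine ⟨Q, ?_⟩
    have h2 := mul_lt_mul_of_pos_right hQ hl2
    rwa [add_mul, div_mul_cancel₀ _ hl2.ne'] at h2
  have hconv := fun (R : ℝ) => converse (R := R) hd ρ hρ hVQ hVd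
  refine le_antisymm (csSup_le ?_ ?_) ?_
  · -- zero is achievable
    refine ⟨0, le_rfl, fun β hβ δ hδ => ⟨0, fun n _ => ⟨1, 1, fun _ => 1, fun _ _ _ => x0,
      fun _ _ => 1, fun _ => zero_le_one, by simp, fun _ _ => Matrix.PosSemidef.one, by simp, ?_, ?_⟩⟩⟩
    · simp only [Nat.cast_one, Real.logb_one, mul_zero]; linarith
    · refine lt_of_le_of_lt (ciSup_le fun sv => ?_) hβ
      have h1 : (Matrix.trace (tensorFam fun i : Fin n => ρ x0 (sv i))) = 1 :=
        (density_tensor fun i => hρ x0 (sv i)).2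
      simp [h1]
  · rintro R ⟨_, hR⟩
    exact hconv R hR
  · refine le_of_forall_lt fun R hRV => ?_
    have hbdd : BddAbove {R : ℝ | 0 ≤ R ∧
      ∀ β > (0 : ℝ), ∀ δ > (0 : ℝ), ∃ N : ℕ, ∀ n ≥ N,
        ∃ (M k : ℕ) (G : Fin k → ℝ) (f : Fin k → Fin M → (Fin n → 𝒳))
          (D : Fin k → Fin M → Matrix (Fin n → Fin d) (Fin n → Fin d) ℂ),
          (∀ γ, 0 ≤ G γ) ∧ (∑ γ, G γ = 1) ∧
          (∀ γ m, (D γ m).PosSemidef) ∧ (∀ γ, ∑ m, D γ m = 1) ∧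
          (1 / (n : ℝ)) * Real.logb 2 M > R - δ ∧
          (⨆ sv : Fin n → 𝒮,
            1 - (1 / (M : ℝ)) * ∑ m, ∑ γ, G γ *
              (Matrix.trace (D γ m * tensorFam fun k' => ρ (f γ m k') (sv k'))).re) < β} :=
      ⟨V, fun R hR => hconv R hR.2⟩
    rcases lt_or_ge R 0 with hR0 | hR0
    · refine lt_of_lt_of_le hR0 (Real.sSup_nonneg fun R hR => hR.1)
    · obtain ⟨R', hRR', hR'V⟩ := exists_between hRV
      obtain ⟨P, hP⟩ := exists_lt_of_lt_ciSup hR'V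
      refine lt_of_lt_of_le hRR' (le_csSup hbdd ⟨hR0.trans hRR'.le, ?_⟩)
      exact direct hd ρ hρ hAss P
        (I0 := (⨅ Q : FinProb 𝒮, mutInfI ρ P.1 Q.1) * Real.log 2)
        (fun Q => mul_le_mul_of_nonneg_right (ciInf_le (hbb P) Q) hl2.le) (hR0.trans hRR'.le)
        (mul_lt_mul_of_pos_right hP hl2)
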